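/- arXiv:2102.01616 — 3 statements merged into one kernel-verified Lean document; each statement's English description precedes it below -/
import Mathlib

section
/- Let (Ω, F, P) be a probability space, let X : [0,∞) × Ω → ℝ be a jointly measurable stochastic process whose sample paths t ↦ X_t(ω) are continuous for almost every ω, and let f : ℝ → ℝ. Assume: (A1)(i) there exist constants K > 0 and η* > 0 such that for every η ∈ (0, η*) and every x ∈ ℝ one has sup_{y ∈ [x, x+η)} |f(y)| ≥ η^K and sup_{y ∈ (x−η, x]} |f(y)| ≥ η^K; (A1)(ii) f is continuously differentiable and there is a constant C₀ > 0 with |f'(x)| ≤ C₀(1+|x|)^{C₀} for all x ∈ ℝ; (A2)(i) there exists ρ > 0 such that for every r > 1, sup{ (E|X_t − X_s|^r)^{1/r} / (t−s)^ρ : 0 ≤ s < t < s+1 } < ∞; (A2)(ii) for every r > 1, sup_{t ≥ 0} (E|X_t|^r)^{1/r} < ∞; (A2)(iii) there exist positive constants Δ*, γ, λ, μ, K₁, K₂, K₃ such that for every s ≥ 0, every Δ ∈ (0, Δ*) and every η ∈ (0, K₃ Δ^γ), P[ sup_{t ∈ [s, s+Δ]} |X_t − X_s| ≤ η ] ≤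 K₁ exp(−K₂ η^{−λ} Δ^μ). Then for every ε > 0, almost surely T^{ε−1} ∫₀^T f(X_t)² dt → ∞ as T → ∞. -/
open Set Filter MeasureTheory

lemma bc {Ω : Type*} [MeasurableSpace Ω] (P : Measure Ω) [IsFiniteMeasure P] (s : ℕ → Set Ω)
    (C : ℝ) (h : ∀ᶠ j : ℕ in atTop, P (s j) ≤ ENNReal.ofReal (C * (j:ℝ) ^ (-2:ℝ))) :
    ∀ᵐ ω ∂P, ∀ᶠ j : ℕ in atTop, ω ∉ s j := by
  obtain ⟨N, hN⟩ := eventually_atTop.1 h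
  have hs : Summable (fun j : ℕ => |C| * (j:ℝ) ^ (-2:ℝ)) :=
    (Real.summable_nat_rpow.2 (by norm_num)).mul_left _
  have hfin : ∑' j, P (if N ≤ j then s j else ∅) ≠ ⊤ := by
    refine ne_top_of_le_ne_top hs.tsum_ofReal_ne_top (ENNReal.tsum_le_tsum fun j => ?_)
    split_ifs with hj
    · refine (hN j hj).trans (ENNReal.ofReal_le_ofReal ?_)
      exact mul_le_mul_of_nonneg_right (le_abs_self _) (by positivity)
    · simp
  filter_upwards [ae_eventually_notMem hfin] with ω hω
  filter_upwards [hω, eventually_ge_atTop N] with j h1 h2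
  simpa [h2] using h1

lemma markov {Ω : Type*} [MeasurableSpace Ω] (P : Measure Ω) (Y : Ω → ℝ)
    (hY : Measurable Y) (r A c : ℝ) (hr : 1 < r) (hA : 0 ≤ A) (hc : 0 < c)
    (h : eLpNorm Y (ENNReal.ofReal r) P ≤ ENNReal.ofReal A) :
    P {ω | c < |Y ω|} ≤ ENNReal.ofReal ((A / c) ^ r) := by
  have hr0 : 0 < r := by linarith
  have h1 := meas_ge_le_mul_pow_eLpNorm_enorm P (p := ENNReal.ofReal r) (f := Y) (by simpa using hr0)
    ENNReal.ofReal_ne_top hY.aestronglyMeasurable (ε := ENNReal.ofReal c) (by simpa using hc) 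
    (by simp)
  refine (measure_mono ?_).trans (h1.trans ?_)
  · intro ω hω
    simp only [mem_ofPred_eq] at hω ⊢
    rw [← ofReal_norm]
    exact ENNReal.ofReal_le_ofReal (by simpa using hω.le)
  · rw [ENNReal.toReal_ofReal hr0.le, ← ENNReal.mul_rpow_of_nonneg _ _ hr0.le,
      ← ENNReal.ofReal_rpow_of_nonneg (by positivity) hr0.le]
    gcongr
    rw [div_eq_inv_mul, ENNReal.ofReal_mul (by positivity), ENNReal.ofReal_inv_of_pos hc]
    gcongr

lemma dyadic (x : ℝ → ℝ) (hx : ContinuousOn x (Ici 0)) (j : ℕ) (M q : ℝ) (hM : 0 ≤ M) (hq0 : 0 < q)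
    (hq1 : q < 1)
    (hinc : ∀ i : ℕ, ∀ k : ℕ, k < 2 ^ (i+1) →
      |x (j + (k+1) / 2 ^ (i+1)) - x (j + k / 2 ^ (i+1))| ≤ M * q ^ (i+1))
    (t : ℝ) (ht : t ∈ Ico (j:ℝ) (j+1)) (m : ℕ) :
    |x (j + (⌊(t - j) * 2 ^ m⌋₊ : ℝ) / 2 ^ m) - x t| ≤ M * q ^ m / (1 - q) := by
  have hu : 0 ≤ t - j := by linarith [ht.1]
  have hu1 : t - j < 1 := by linarith [ht.2]
  refine dist_le_of_le_geometric_of_tendsto (f := fun i : ℕ => x (j + (⌊(t - j) * 2 ^ i⌋₊ : ℝ) / 2 ^ i))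
    q M hq1 ?_ ?_ m
  · intro i
    rw [dist_comm, Real.dist_eq]
    set n := ⌊(t - j) * 2 ^ i⌋₊ with hn
    set n' := ⌊(t - j) * 2 ^ (i+1)⌋₊ with hn'
    have h0 : 0 ≤ (t-j) * 2^i := by positivity
    have h0' : 0 ≤ (t-j) * 2^(i+1) := by positivity
    have a1 : (n:ℝ) ≤ (t-j) * 2^i := Nat.floor_le h0
    have a2 : (t-j) * 2^i < n + 1 := Nat.lt_floor_add_one _
    have b1 : (n':ℝ) ≤ (t-j) * 2^(i+1) := Nat.floor_le h0'
    have b2 : (t-j) * 2^(i+1) < n' + 1 := Nat.lt_floor_add_one _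
    have c1 : n' < 2 * n + 2 := by
      have : (n':ℝ) < 2 * n + 2 := by rw [pow_succ] at b1; linarith
      exact_mod_cast this
    have c2 : 2 * n < n' + 1 := by
      have : (2 * n:ℝ) < n' + 1 := by rw [pow_succ] at b2; linarith
      exact_mod_cast this
    have hn2 : n < 2 ^ i := by
      have : (n:ℝ) < 2 ^ i := by
        have : (t-j) * 2^i < 1 * 2 ^ i := by gcongr
        linarith
      exact_mod_cast this
    have e1 : (j + (n:ℝ) / 2 ^ i) = j + ((2 * n : ℕ):ℝ) / 2 ^ (i+1) := by
      push_cast; rw [pow_succ]; field_simp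
    have hqq : M * q ^ (i+1) ≤ M * q ^ i := by
      apply mul_le_mul_of_nonneg_left _ hM
      exact pow_le_pow_of_le_one hq0.le hq1.le (by omega)
    rw [e1]
    rcases (show n' = 2 * n ∨ n' = 2 * n + 1 by omega) with h | h
    · rw [h]; simp; positivity
    · rw [h]
      refine le_trans ?_ hqq
      have := hinc i (2*n) (by rw [pow_succ]; omega)
      rw [Nat.cast_succ]
      exact this
  · have hcw : ContinuousWithinAt x (Ici 0) t := hx t (by
      have : (0:ℝ) ≤ j := by positivity
      exact this.trans ht.1)
    refine hcw.tendsto.comp (tendsto_nhdsWithin_iff.2 ⟨?_, ?_⟩)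
    · have h1 : Tendsto (fun i : ℕ => (⌊(t-j) * 2^i⌋₊:ℝ) / 2^i) atTop (nhds (t-j)) :=
        (tendsto_nat_floor_mul_div_atTop hu).comp
          (tendsto_pow_atTop_atTop_of_one_lt (by norm_num : (1:ℝ) < 2))
      simpa using h1.const_add (j:ℝ)
    · exact Eventually.of_forall fun i => by simp only [mem_Ici]; positivity

lemma block (g : ℝ → ℝ) (j : ℕ) (hg : ContinuousOn g (Icc (j:ℝ) (j+1))) (n m : ℕ) (hn : n < 2 ^ m)
    (h : ℝ) (h0 : 0 ≤ h)
    (hh : ∀ t ∈ Ioo (j + (n:ℝ) / 2 ^ m) (j + (n+1:ℝ) / 2 ^ m), h ≤ |g t|) :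
    h ^ 2 * (1 / 2 ^ m) ≤ ∫ t in Ioc (j:ℝ) (j+1), (g t) ^ 2 := by
  have hint : IntegrableOn (fun t => (g t)^2) (Ioc (j:ℝ) (j+1)) :=
    ((hg.pow 2).integrableOn_Icc).mono_set Ioc_subset_Icc_self
  have hsub : Ioo (j + (n:ℝ) / 2 ^ m) (j + (n+1:ℝ) / 2 ^ m) ⊆ Ioc (j:ℝ) (j+1) := by
    intro t ht
    have h1 : 0 ≤ (n:ℝ) / 2 ^ m := by positivity
    have h2 : (n+1:ℝ) / 2 ^ m ≤ 1 := by
      rw [div_le_one (by positivity)]; exact_mod_cast hn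
    exact ⟨by linarith [ht.1], by linarith [ht.2]⟩
  calc h ^ 2 * (1 / 2 ^ m) = ∫ t in Ioo (j + (n:ℝ) / 2 ^ m) (j + (n+1:ℝ) / 2 ^ m), h ^ 2 := by
        rw [setIntegral_const]
        simp only [Measure.real, Real.volume_Ioo, smul_eq_mul]
        rw [ENNReal.toReal_ofReal, mul_comm]
        · congr 1; ring
        · rw [add_div]; have : (0:ℝ) ≤ 1 / 2 ^ m := by positivity
          linarith
    _ ≤ ∫ t in Ioo (j + (n:ℝ) / 2 ^ m) (j + (n+1:ℝ) / 2 ^ m), (g t)^2 := by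
        refine setIntegral_mono_on (by simp) (hint.mono_set hsub) measurableSet_Ioo ?_
        intro t ht
        rw [← sq_abs (g t)]
        have := hh t ht
        gcongr
    _ ≤ _ := setIntegral_mono_set hint (Eventually.of_forall fun t => sq_nonneg _) hsub.eventuallyLE

lemma det (f : ℝ → ℝ) (K ηs C₀ α : ℝ) (hK : 0 < K) (hηs : 0 < ηs) (hC₀ : 0 < C₀) (hα : 0 < α)
    (hA1i : ∀ η ∈ Ioo (0:ℝ) ηs, ∀ x : ℝ,
      (((η ^ K : ℝ) : EReal) ≤ ⨆ y ∈ Ico x (x + η), ((|f y| : ℝ) : EReal)) ∧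
      (((η ^ K : ℝ) : EReal) ≤ ⨆ y ∈ Ioc (x - η) x, ((|f y| : ℝ) : EReal)))
    (hfC1 : ContDiff ℝ 1 f)
    (hA1ii : ∀ x : ℝ, |deriv f x| ≤ C₀ * (1 + |x|) ^ C₀) :
    ∃ Y : ℝ, ∀ y ≥ Y, ∀ (j : ℕ) (x : ℝ → ℝ) (Δ : ℝ), Δ < 1 → ContinuousOn x (Ici 0) → |x j| ≤ y →
      (∀ i : ℕ, ∀ k : ℕ, k < 2 ^ (i+1) →
        |x (j + (k+1) / 2 ^ (i+1)) - x (j + k / 2 ^ (i+1))| ≤ y * ((2:ℝ) ^ (-α)) ^ (i+1)) →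
      (∃ t ∈ Icc (j:ℝ) (j + Δ), y⁻¹ < |x t - x j|) →
      y ^ (-((C₀ + 2 + K) / α + 2 * K + 1)) ≤ ∫ t in Ioc (j:ℝ) (j+1), (f (x t)) ^ 2 := by
  set q : ℝ := (2:ℝ) ^ (-α) with hq
  have hq0 : 0 < q := by positivity
  have hq1 : q < 1 := Real.rpow_lt_one_of_one_lt_of_neg (by norm_num) (by linarith)
  set S : ℝ := 1 / (1 - q) with hS
  have hS0 : 0 < S := by rw [hS]; apply one_div_pos.2; linarith
  set D : ℝ := C₀ * (2 + S) ^ C₀ * (2 * S) with hD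
  have hD0 : 0 < D := by positivity
  refine ⟨max (max 32 (2 / ηs)) (4 * D), ?_⟩
  intro y hy j x Δ hΔ hx hxj hinc ⟨t₁, ht₁, hlarge⟩
  have y32 : 32 ≤ y := (le_max_left _ _).trans ((le_max_left _ _).trans hy)
  have yη : 2 / ηs ≤ y := (le_max_right _ _).trans ((le_max_left _ _).trans hy)
  have yD : 4 * D ≤ y := (le_max_right _ _).trans hy
  have y0 : 0 < y := by linarith
  have y1 : 1 ≤ y := by linarith
  have hj0 : (0:ℝ) ≤ j := by positivity
  have hη : y⁻¹ ∈ Ioo 0 ηs := by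
    refine ⟨by positivity, ?_⟩
    rw [div_le_iff₀ hηs] at yη
    rw [inv_lt_iff_one_lt_mul₀ y0]; linarith
  set h : ℝ := y ^ (-K) with hh
  have h0 : 0 < h := by positivity
  have hpow : (y⁻¹) ^ K = h := by rw [hh, Real.rpow_neg y0.le, Real.inv_rpow y0.le]
  have hlt : ((h / 2 : ℝ) : EReal) < ((y⁻¹ ^ K : ℝ) : EReal) := by
    rw [hpow]; exact_mod_cast (by linarith : h / 2 < h)
  have hxc : ContinuousOn x (Icc (j:ℝ) t₁) := hx.mono fun s hs => hj0.trans hs.1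
  -- a time with f large
  obtain ⟨t₀, ht₀, hf₀⟩ : ∃ t₀ ∈ Ico (j:ℝ) (j+1), h / 2 < |f (x t₀)| := by
    rcases lt_abs.1 hlarge with hl | hl
    · obtain ⟨z, hz, hfz⟩ := lt_biSup_iff.1 (hlt.trans_le (hA1i _ hη (x j)).1)
      obtain ⟨t, ht, rfl⟩ := intermediate_value_Icc ht₁.1 hxc
        (show z ∈ Icc (x j) (x t₁) from ⟨hz.1, by linarith [hz.2]⟩)
      exact ⟨t, ⟨ht.1, by linarith [ht.2, ht₁.2]⟩, by exact_mod_cast hfz⟩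
    · obtain ⟨z, hz, hfz⟩ := lt_biSup_iff.1 (hlt.trans_le (hA1i _ hη (x j)).2)
      obtain ⟨t, ht, rfl⟩ := intermediate_value_Icc' ht₁.1 hxc
        (show z ∈ Icc (x t₁) (x j) from ⟨by linarith [hz.1], hz.2⟩)
      exact ⟨t, ⟨ht.1, by linarith [ht.2, ht₁.2]⟩, by exact_mod_cast hfz⟩
  have hdy := dyadic x hx j y q y0.le hq0 hq1 hinc
  have hdy' : ∀ t ∈ Ico (j:ℝ) (j+1), ∀ m : ℕ,
      |x (j + (⌊(t - j) * 2 ^ m⌋₊ : ℝ) / 2 ^ m) - x t| ≤ S * y * q ^ m := by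
    intro t ht m
    refine (hdy t ht m).trans (le_of_eq ?_)
    rw [hS]; ring
  have hbd : ∀ t ∈ Ico (j:ℝ) (j+1), |x t| ≤ (1 + S) * y := by
    intro t ht
    have h1 := hdy' t ht 0
    have : ⌊t - (j:ℝ)⌋₊ = 0 := Nat.floor_eq_zero.2 (by linarith [ht.2])
    simp only [pow_zero, mul_one, this, Nat.cast_zero, zero_div, add_zero] at h1
    have := abs_sub_abs_le_abs_sub (x t) (x j)
    rw [abs_sub_comm] at this
    linarith
  set L : ℝ := C₀ * ((2 + S) * y) ^ C₀ with hL
  have hL0 : 0 < L := by positivity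
  have hlip : ∀ u v : ℝ, |u| ≤ (1 + S) * y → |v| ≤ (1 + S) * y → |f u - f v| ≤ L * |u - v| := by
    intro u v hu hv
    refine Convex.norm_image_sub_le_of_norm_deriv_le (s := Icc (-((1+S)*y)) ((1+S)*y))
      (fun z _ => (hfC1.differentiable (by norm_num)) z) (fun z hz => ?_) (convex_Icc _ _)
      (abs_le.1 hv) (abs_le.1 hu)
    refine (hA1ii z).trans ?_
    have := abs_le.2 hz
    rw [hL]
    gcongr
    linarith
  -- choose the scale
  set a : ℝ := (C₀ + 2 + K) / α with ha
  have ha0 : 0 < a := by positivity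
  obtain ⟨n, hn1, hn2⟩ := exists_nat_pow_near (x := y ^ a) (y := (2:ℝ))
    (Real.one_le_rpow y1 ha0.le) (by norm_num)
  set m := n + 1 with hm
  have hm2 : (2:ℝ) ^ m ≤ 2 * y ^ a := by rw [hm, pow_succ]; linarith
  have hqm : q ^ m ≤ y ^ (-(C₀ + 2 + K)) := by
    have e1 : q ^ m = ((2:ℝ) ^ m) ^ (-α) := by
      rw [hq, ← Real.rpow_natCast, ← Real.rpow_natCast, ← Real.rpow_mul (by norm_num),
        ← Real.rpow_mul (by norm_num), mul_comm]
    have e2 : y ^ (-(C₀ + 2 + K)) = (y ^ a) ^ (-α) := by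
      rw [← Real.rpow_mul y0.le, ha]; congr 1; field_simp
    rw [e1, e2]
    exact Real.rpow_le_rpow_of_nonpos (by positivity) hn2.le (by linarith)
  have hosc : L * (2 * (S * y * q ^ m)) ≤ h / 4 := by
    have : L * (2 * (S * y * y ^ (-(C₀ + 2 + K)))) = D * (y⁻¹ * h) := by
      rw [hL, hD, hh, Real.mul_rpow (by positivity) y0.le]
      have e : y ^ C₀ * (y * y ^ (-(C₀ + 2 + K))) = y⁻¹ * y ^ (-K) := by
        rw [← Real.rpow_neg_one y, ← Real.rpow_add y0]
        nth_rewrite 2 [← Real.rpow_one y]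
        rw [← Real.rpow_add y0, ← Real.rpow_add y0]
        congr 1; ring
      linear_combination C₀ * (2+S)^C₀ * 2 * S * e
    calc L * (2 * (S * y * q ^ m)) ≤ L * (2 * (S * y * y ^ (-(C₀ + 2 + K)))) := by gcongr
      _ = D * (y⁻¹ * h) := this
      _ = (D * y⁻¹) * h := by ring
      _ ≤ (1/4) * h := by
        gcongr
        rw [← div_eq_mul_inv, div_le_iff₀ y0]; linarith
      _ = h / 4 := by ring
  set N := ⌊(t₀ - j) * 2 ^ m⌋₊ with hN
  have hu0 : 0 ≤ t₀ - j := by linarith [ht₀.1]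
  have hNlt : N < 2 ^ m := by
    have : (N:ℝ) < 2 ^ m := by
      have h1 : (N:ℝ) ≤ (t₀ - j) * 2 ^ m := Nat.floor_le (by positivity)
      have h2 : (t₀ - j) * 2 ^ m < 1 * 2 ^ m := by gcongr; linarith [ht₀.2]
      linarith
    exact_mod_cast this
  have hgc : ContinuousOn (fun t => f (x t)) (Icc (j:ℝ) (j+1)) :=
    hfC1.continuous.comp_continuousOn (hx.mono fun s hs => hj0.trans hs.1)
  refine le_trans ?_ (block (fun t => f (x t)) j hgc N m hNlt (h/4) (by positivity) ?_)
  · have e : y ^ (-(a + 2 * K + 1)) = h ^ 2 * (y ^ a)⁻¹ * y⁻¹ := by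
      rw [hh, ← Real.rpow_neg_one y, ← Real.rpow_neg y0.le, ← Real.rpow_natCast,
        ← Real.rpow_mul y0.le, ← Real.rpow_add y0, ← Real.rpow_add y0]
      congr 1; push_cast; ring
    rw [e]
    have h1 : (2 * y ^ a)⁻¹ ≤ 1 / 2 ^ m := by
      rw [one_div]; exact inv_anti₀ (by positivity) hm2
    have h2 : y⁻¹ ≤ 32⁻¹ := inv_anti₀ (by norm_num) y32
    calc h ^ 2 * (y ^ a)⁻¹ * y⁻¹ ≤ h ^ 2 * (y ^ a)⁻¹ * 32⁻¹ := by gcongr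
      _ = (h / 4) ^ 2 * (2 * y ^ a)⁻¹ := by rw [mul_inv]; ring
      _ ≤ _ := by gcongr
  · intro t ht
    have hpos : (0:ℝ) < 2 ^ m := by positivity
    have g1 : (N:ℝ) < (t - j) * 2 ^ m := by
      rw [← div_lt_iff₀ hpos]; linarith [ht.1]
    have g2 : (t - j) * 2 ^ m < N + 1 := by
      rw [← lt_div_iff₀ hpos]; linarith [ht.2]
    have hfl : ⌊(t - j) * 2 ^ m⌋₊ = N := by
      rw [Nat.floor_eq_iff (by linarith [(Nat.cast_nonneg N : (0:ℝ) ≤ N)])]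
      exact ⟨g1.le, g2⟩
    have htI : t ∈ Ico (j:ℝ) (j+1) := by
      have h1 : 0 ≤ (N:ℝ) / 2 ^ m := by positivity
      have h2 : (N+1:ℝ) / 2 ^ m ≤ 1 := by
        rw [div_le_one (by positivity)]; exact_mod_cast hNlt
      exact ⟨by linarith [ht.1], by linarith [ht.2]⟩
    have d1 := hdy' t htI m
    have d2 := hdy' t₀ ht₀ m
    rw [hfl] at d1
    rw [← hN] at d2
    have d3 : |x t₀ - x t| ≤ 2 * (S * y * q ^ m) := by
      have := abs_sub_le (x t₀) (x (j + (N:ℝ) / 2 ^ m)) (x t)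
      rw [abs_sub_comm (x t₀) (x (j + (N:ℝ) / 2 ^ m))] at this
      linarith
    have d4 : |f (x t₀) - f (x t)| ≤ h / 4 := by
      refine (hlip _ _ (hbd _ ht₀) (hbd _ htI)).trans (le_trans ?_ hosc)
      gcongr
    have := abs_sub_abs_le_abs_sub (f (x t₀)) (f (x t))
    show h / 4 ≤ |f (x t)|
    linarith

lemma good1 {Ω : Type*} [MeasurableSpace Ω] (P : Measure Ω) [IsProbabilityMeasure P]
    (X : ℝ → Ω → ℝ) (hX : ∀ t, Measurable (X t))
    (hA2ii : ∀ r > (1:ℝ), ∃ B : ℝ, ∀ t : ℝ, 0 ≤ t →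
      eLpNorm (X t) (ENNReal.ofReal r) P ≤ ENNReal.ofReal B) (b : ℝ) (hb : 0 < b) :
    ∀ᵐ ω ∂P, ∀ᶠ j : ℕ in atTop, |X j ω| ≤ (j:ℝ) ^ b := by
  obtain ⟨B, hB⟩ := hA2ii (2 / b + 2) (by have : 0 < 2 / b := by positivity
                                          linarith)
  have := bc P (fun j : ℕ => {ω | (j:ℝ) ^ b < |X j ω|}) (|B| ^ (2 / b + 2)) ?_
  · filter_upwards [this] with ω hω
    filter_upwards [hω] with j hj
    simpa using hj
  · filter_upwards [eventually_ge_atTop 1] with j hj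
    have hj1 : (1:ℝ) ≤ j := by exact_mod_cast hj
    have hj0 : (0:ℝ) < j := by linarith
    have hb2 : 0 < 2 / b := by positivity
    refine (markov P (X j) (hX j) (2 / b + 2) |B| ((j:ℝ) ^ b) (by linarith) (abs_nonneg _)
      (by positivity) ((hB j hj0.le).trans (ENNReal.ofReal_le_ofReal (le_abs_self _)))).trans ?_
    apply ENNReal.ofReal_le_ofReal
    rw [div_eq_mul_inv, Real.mul_rpow (abs_nonneg _) (by positivity), ← Real.rpow_neg hj0.le,
      ← Real.rpow_mul hj0.le]
    gcongr
    have : b * (2 / b) = 2 := by field_simp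
    nlinarith

lemma good2 {Ω : Type*} [MeasurableSpace Ω] (P : Measure Ω) [IsProbabilityMeasure P]
    (X : ℝ → Ω → ℝ) (hX : ∀ t, Measurable (X t)) (α : ℝ) (hα : 0 < α)
    (hA2i : ∀ r > (1:ℝ), ∃ B : ℝ, ∀ s t : ℝ, 0 ≤ s → s < t → t < s + 1 →
      eLpNorm (fun ω => X t ω - X s ω) (ENNReal.ofReal r) P
        ≤ ENNReal.ofReal (B * (t - s) ^ (2 * α))) (b : ℝ) (hb : 0 < b) :
    ∀ᵐ ω ∂P, ∀ᶠ j : ℕ in atTop, ∀ i : ℕ, ∀ k : ℕ, k < 2 ^ (i+1) →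
        |X (j + (k+1) / 2 ^ (i+1)) ω - X (j + k / 2 ^ (i+1)) ω|
          ≤ (j:ℝ) ^ b * ((2:ℝ) ^ (-α)) ^ (i+1) := by
  have hb2 : 0 < 2 / b := by positivity
  have hα2 : 0 < 2 / α := by positivity
  set r : ℝ := 2 / b + 2 / α + 2 with hr
  have hr1 : 1 < r := by linarith
  have hbr : 2 ≤ b * r := by
    have : b * (2 / b) = 2 := by field_simp
    nlinarith [mul_pos hb hα2]
  have hαr : 2 ≤ α * r := by
    have : α * (2 / α) = 2 := by field_simp
    nlinarith [mul_pos hα hb2]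
  obtain ⟨B, hB⟩ := hA2i r hr1
  have key := bc P (fun j : ℕ => ⋃ i : ℕ, ⋃ k ∈ Finset.range (2 ^ (i+1)),
    {ω | (j:ℝ) ^ b * ((2:ℝ) ^ (-α)) ^ (i+1) <
      |X (j + (k+1) / 2 ^ (i+1)) ω - X (j + k / 2 ^ (i+1)) ω|}) (|B| ^ r) ?_
  · filter_upwards [key] with ω hω
    filter_upwards [hω] with j hj i k hk
    by_contra hcon
    apply hj
    simp only [mem_iUnion]
    exact ⟨i, k, Finset.mem_range.2 hk, not_le.1 hcon⟩
  · filter_upwards [eventually_ge_atTop 1] with j hj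
    have hj1 : (1:ℝ) ≤ j := by exact_mod_cast hj
    have hj0 : (0:ℝ) < j := by linarith
    set W : ℝ := |B| ^ r * (j:ℝ) ^ (-2:ℝ) with hW
    have hW0 : 0 ≤ W := by positivity
    have hsingle : ∀ i k : ℕ, P {ω | (j:ℝ) ^ b * ((2:ℝ) ^ (-α)) ^ (i+1) <
        |X (j + (k+1) / 2 ^ (i+1)) ω - X (j + k / 2 ^ (i+1)) ω|}
        ≤ ENNReal.ofReal (W * ((1/2:ℝ) ^ (i+1)) ^ 2) := by
      intro i k
      set d : ℝ := (1/2:ℝ) ^ (i+1) with hd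
      have hd0 : 0 < d := by positivity
      have hd1 : d ≤ 1/2 := by
        rw [hd, pow_succ]
        have : (1/2:ℝ)^i ≤ 1 := pow_le_one₀ (by norm_num) (by norm_num)
        linarith
      have hdiff : ((j:ℝ) + (k+1) / 2 ^ (i+1)) - (j + k / 2 ^ (i+1)) = d := by
        rw [hd, div_pow, one_pow]; ring
      have hq : ((2:ℝ) ^ (-α)) ^ (i+1) = d ^ α := by
        rw [hd, Real.rpow_neg (by norm_num), ← Real.inv_rpow (by norm_num), ← Real.rpow_natCast,
          ← Real.rpow_natCast, ← Real.rpow_mul (by norm_num), ← Real.rpow_mul (by norm_num),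
          mul_comm]
        norm_num
      have h1 := hB (j + k / 2 ^ (i+1)) (j + (k+1) / 2 ^ (i+1)) (by positivity)
        (by linarith) (by linarith)
      rw [hdiff] at h1
      have h2 := markov P _ ((hX (j + (k+1) / 2 ^ (i+1))).sub (hX (j + k / 2 ^ (i+1)))) r
        (|B| * d ^ (2 * α)) ((j:ℝ) ^ b * d ^ α) hr1 (by positivity) (by positivity)
        (h1.trans (ENNReal.ofReal_le_ofReal (by gcongr; exact le_abs_self _)))
      rw [hq]
      refine h2.trans (ENNReal.ofReal_le_ofReal ?_)
      have e : |B| * d ^ (2 * α) / ((j:ℝ) ^ b * d ^ α) = |B| * (j:ℝ) ^ (-b) * d ^ α := by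
        rw [Real.rpow_neg hj0.le, two_mul, Real.rpow_add hd0]
        field_simp
      rw [e, Real.mul_rpow (by positivity) (by positivity),
        Real.mul_rpow (by positivity) (by positivity), ← Real.rpow_mul hj0.le,
        ← Real.rpow_mul hd0.le, hW]
      have e2 : d ^ (α * r) ≤ d ^ 2 := by
        rw [← Real.rpow_natCast]
        exact Real.rpow_le_rpow_of_exponent_ge hd0 (by linarith) (by push_cast; linarith)
      have e3 : (j:ℝ) ^ (-b * r) ≤ (j:ℝ) ^ (-2:ℝ) :=
        Real.rpow_le_rpow_of_exponent_le hj1 (by linarith)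
      gcongr
    have hlevel : ∀ i : ℕ, P (⋃ k ∈ Finset.range (2 ^ (i+1)),
        {ω | (j:ℝ) ^ b * ((2:ℝ) ^ (-α)) ^ (i+1) <
          |X (j + (k+1) / 2 ^ (i+1)) ω - X (j + k / 2 ^ (i+1)) ω|})
        ≤ ENNReal.ofReal (W * (1/2:ℝ) ^ (i+1)) := by
      intro i
      refine (measure_biUnion_finset_le _ _).trans
        ((Finset.sum_le_sum fun k _ => hsingle i k).trans (le_of_eq ?_))
      rw [Finset.sum_const, Finset.card_range, nsmul_eq_mul, ← ENNReal.ofReal_natCast,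
        ← ENNReal.ofReal_mul (by positivity)]
      congr 1
      push_cast
      rw [div_pow, one_pow]
      field_simp
    refine (measure_iUnion_le _).trans ((ENNReal.tsum_le_tsum hlevel).trans (le_of_eq ?_))
    have hs : HasSum (fun i : ℕ => W * (1/2:ℝ) ^ (i+1)) W := by
      have := (hasSum_geometric_two.mul_left (W * (1/2)))
      have e1 : (fun i : ℕ => W * (1/2:ℝ) ^ (i+1)) = fun i : ℕ => W * (1/2) * (1/2:ℝ) ^ i := by
        funext i; rw [pow_succ]; ring
      have e2 : W * (1/2) * 2 = W := by ring
      rw [e2] at this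
      rw [e1]; exact this
    rw [← ENNReal.ofReal_tsum_of_nonneg (fun i => by positivity) hs.summable, hs.tsum_eq]

lemma good3 {Ω : Type*} [MeasurableSpace Ω] (P : Measure Ω) [IsProbabilityMeasure P]
    (X : ℝ → Ω → ℝ) 
    (hA2iii : ∃ Δs > (0:ℝ), ∃ γ > (0:ℝ), ∃ lam > (0:ℝ), ∃ μ₀ > (0:ℝ),
      ∃ K₁ > (0:ℝ), ∃ K₂ > (0:ℝ), ∃ K₃ > (0:ℝ),
      ∀ s : ℝ, 0 ≤ s → ∀ Δ ∈ Ioo (0:ℝ) Δs, ∀ η ∈ Ioo (0:ℝ) (K₃ * Δ ^ γ),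
        P {ω | ∀ t ∈ Icc s (s + Δ), |X t ω - X s ω| ≤ η}
          ≤ ENNReal.ofReal (K₁ * Real.exp (-K₂ * η ^ (-lam) * Δ ^ μ₀))) (b : ℝ) (hb : 0 < b) :
    ∃ Δ < (1:ℝ), ∀ᵐ ω ∂P, ∀ᶠ j : ℕ in atTop,
      ∃ t ∈ Icc (j:ℝ) (j + Δ), ((j:ℝ) ^ b)⁻¹ < |X t ω - X j ω| := by
  obtain ⟨Δs, hΔs, γ, hγ, lam, hlam, μ₀, hμ₀, K₁, hK₁, K₂, hK₂, K₃, hK₃, H⟩ := hA2iii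
  set Δ := min (Δs / 2) (1/2) with hΔ
  have hΔ0 : 0 < Δ := by rw [hΔ]; positivity
  have hΔ1 : Δ < 1 := (min_le_right _ _).trans_lt (by norm_num)
  have hΔ2 : Δ < Δs := (min_le_left _ _).trans_lt (by linarith)
  refine ⟨Δ, hΔ1, ?_⟩
  have key := bc P (fun j : ℕ => {ω | ∀ t ∈ Icc (j:ℝ) (j + Δ), |X t ω - X j ω| ≤ ((j:ℝ) ^ b)⁻¹})
    K₁ ?_
  · filter_upwards [key] with ω hω
    filter_upwards [hω] with j hj
    simpa [and_assoc] using hj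
  · have hc : 0 < K₂ * Δ ^ μ₀ := by positivity
    have hbl : 0 < b * lam := by positivity
    have t1 : Tendsto (fun j : ℕ => (j:ℝ) ^ b) atTop atTop :=
      (tendsto_rpow_atTop hb).comp tendsto_natCast_atTop_atTop
    have t2 : Tendsto (fun j : ℕ => (j:ℝ) ^ (b * lam)) atTop atTop :=
      (tendsto_rpow_atTop hbl).comp tendsto_natCast_atTop_atTop
    have hlo := ((isLittleO_exp_neg_mul_rpow_atTop hc (-2 / (b * lam))).bound one_pos)
    filter_upwards [t1.inv_tendsto_atTop.eventually_lt_const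
      (show 0 < K₃ * Δ ^ γ by positivity), t2.eventually hlo, eventually_ge_atTop 1] with j h1 h2 hj
    have hj1 : (1:ℝ) ≤ j := by exact_mod_cast hj
    have hj0 : (0:ℝ) < j := by linarith
    refine (H j hj0.le Δ ⟨hΔ0, hΔ2⟩ ((j:ℝ) ^ b)⁻¹ ⟨by positivity, h1⟩).trans
      (ENNReal.ofReal_le_ofReal ?_)
    gcongr
    rw [Real.norm_of_nonneg (by positivity), Real.norm_of_nonneg (by positivity),
      ← Real.rpow_mul hj0.le, one_mul] at h2
    have e1 : b * lam * (-2 / (b * lam)) = -2 := by field_simp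
    rw [e1] at h2
    refine le_trans (le_of_eq ?_) h2
    have e2 : (((j:ℝ) ^ b)⁻¹) ^ (-lam) = (j:ℝ) ^ (b * lam) := by
      rw [← Real.rpow_neg hj0.le, ← Real.rpow_mul hj0.le]; congr 1; ring
    rw [e2]; congr 1; ring

lemma final (g : ℝ → ℝ) (hg : ContinuousOn g (Ici 0)) (ε : ℝ) (hε : 0 < ε)
    (h : ∀ᶠ j : ℕ in atTop, (j:ℝ) ^ (-(ε/2)) ≤ ∫ t in Ioc (j:ℝ) (j+1), (g t) ^ 2) :
    Tendsto (fun T : ℝ => T ^ (ε - 1) * ∫ t in Ioc (0:ℝ) T, (g t) ^ 2) atTop atTop := by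
  obtain ⟨N₀, hN₀⟩ := eventually_atTop.1 h
  set N := N₀ + 1 with hN
  have hint : ∀ a b : ℝ, 0 ≤ a → IntegrableOn (fun t => (g t)^2) (Ioc a b) := fun a b ha =>
    (((hg.mono fun s (hs : s ∈ Icc a b) => ha.trans hs.1).pow 2).integrableOn_Icc).mono_set
      Ioc_subset_Icc_self
  have hind : ∀ (T : ℝ) (n : ℕ), ((N + n : ℕ):ℝ) ≤ T →
      n * T ^ (-(ε/2)) ≤ ∫ t in Ioc (N:ℝ) ((N + n : ℕ):ℝ), (g t)^2 := by
    intro T n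
    induction n with
    | zero => intro _; simp
    | succ n ih =>
      intro hT
      push_cast at hT ih
      have h1 := ih (by linarith)
      have h2 := hN₀ (N + n) (by omega)
      have hNn : (0:ℝ) ≤ (N:ℝ) + n := by positivity
      have hNpos : (0:ℝ) < N := by rw [hN]; positivity
      have h3 : T ^ (-(ε/2)) ≤ ((N + n : ℕ):ℝ) ^ (-(ε/2)) := by
        push_cast
        exact Real.rpow_le_rpow_of_nonpos (by positivity) (by linarith) (by linarith)
      have hU : Ioc (N:ℝ) ((N + (n+1) : ℕ):ℝ) = Ioc (N:ℝ) ((N:ℝ) + n) ∪ Ioc ((N:ℝ) + n) (N + n + 1) := by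
        rw [Ioc_union_Ioc_eq_Ioc (by linarith [(Nat.cast_nonneg n : (0:ℝ) ≤ n)]) (by linarith)]
        push_cast; rw [add_assoc]
      rw [hU, setIntegral_union (Ioc_disjoint_Ioc_of_le le_rfl) measurableSet_Ioc
        (hint _ _ (by positivity)) (hint _ _ (by positivity))]
      push_cast at h2 h3 ⊢
      linarith
  have hlow : ∀ T : ℝ, (N:ℝ) + 1 ≤ T →
      T ^ (ε / 2) * (1 - (N + 1) * T⁻¹) ≤ T ^ (ε - 1) * ∫ t in Ioc (0:ℝ) T, (g t) ^ 2 := by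
    intro T hT
    have hNpos : (0:ℝ) ≤ N := by positivity
    have hT0 : 0 < T := by linarith
    have hfl : N ≤ ⌊T⌋₊ := Nat.le_floor (by linarith)
    obtain ⟨n, hn⟩ := Nat.exists_eq_add_of_le hfl
    have hfT : ((N + n : ℕ):ℝ) ≤ T := by rw [← hn]; exact Nat.floor_le hT0.le
    have hfT2 : T < ((N + n : ℕ):ℝ) + 1 := by rw [← hn]; exact Nat.lt_floor_add_one _
    have h1 := hind T n hfT
    have h2 : ∫ t in Ioc (N:ℝ) ((N + n : ℕ):ℝ), (g t)^2 ≤ ∫ t in Ioc (0:ℝ) T, (g t) ^ 2 :=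
      setIntegral_mono_set (hint _ _ le_rfl) (Eventually.of_forall fun t => sq_nonneg _)
        (Ioc_subset_Ioc hNpos hfT).eventuallyLE
    push_cast at hfT2
    have e : T ^ (ε / 2) * (1 - (N + 1) * T⁻¹) = T ^ (ε - 1) * ((T - N - 1) * T ^ (-(ε/2))) := by
      have : T ^ (ε/2) = T ^ (ε - 1) * T ^ (-(ε/2)) * T := by
        nth_rewrite 4 [← Real.rpow_one T]
        rw [← Real.rpow_add hT0, ← Real.rpow_add hT0]; congr 1; ring
      rw [this]; field_simp; ring
    rw [e]
    have h4 : (T - N - 1) * T ^ (-(ε/2)) ≤ n * T ^ (-(ε/2)) := by gcongr; linarith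
    have : 0 ≤ T ^ (ε - 1) := by positivity
    exact mul_le_mul_of_nonneg_left (h4.trans (h1.trans h2)) this
  have hlim : Tendsto (fun T : ℝ => T ^ (ε / 2) * (1 - (N + 1) * T⁻¹)) atTop atTop := by
    refine (tendsto_rpow_atTop (by linarith)).atTop_mul_pos (C := 1) one_pos ?_
    simpa using (tendsto_inv_atTop_zero.const_mul ((N:ℝ) + 1)).const_sub (1:ℝ)
  refine tendsto_atTop_mono' _ ?_ hlim
  filter_upwards [eventually_ge_atTop ((N:ℝ) + 1)] with T hT using hlow T hT


/-- under (A1)(i)-(ii) on `f` and (A2)(i)-(iii) on the a.s. continuous,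
jointly measurable process `X` (Hölder continuity in `L^{∞-}`, boundedness in `L^{∞-}`,
and the relaxed small ball estimate), for every `ε > 0`, almost surely
`T^{ε-1} ∫₀^T f(X_t)² dt → ∞` as `T → ∞`. -/
theorem stmt_3
    {Ω : Type*} [MeasurableSpace Ω] (P : Measure Ω) [IsProbabilityMeasure P]
    (X : ℝ → Ω → ℝ) (f : ℝ → ℝ)
    (hXmeas : Measurable (Function.uncurry X))
    (hXcont : ∀ᵐ ω ∂P, ContinuousOn (fun t => X t ω) (Ici 0))
    -- (A1)(i)
    (hA1i : ∃ K > (0:ℝ), ∃ ηs > (0:ℝ), ∀ η ∈ Ioo (0:ℝ) ηs, ∀ x : ℝ,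
      (((η ^ K : ℝ) : EReal) ≤ ⨆ y ∈ Ico x (x + η), ((|f y| : ℝ) : EReal)) ∧
      (((η ^ K : ℝ) : EReal) ≤ ⨆ y ∈ Ioc (x - η) x, ((|f y| : ℝ) : EReal)))
    -- (A1)(ii)
    (hfC1 : ContDiff ℝ 1 f)
    (hA1ii : ∃ C₀ > (0:ℝ), ∀ x : ℝ, |deriv f x| ≤ C₀ * (1 + |x|) ^ C₀)
    -- (A2)(i): Hölder continuity in L^{∞-}
    (hA2i : ∃ ρ > (0:ℝ), ∀ r > (1:ℝ), ∃ B : ℝ, ∀ s t : ℝ, 0 ≤ s → s < t → t < s + 1 →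
      eLpNorm (fun ω => X t ω - X s ω) (ENNReal.ofReal r) P
        ≤ ENNReal.ofReal (B * (t - s) ^ ρ))
    -- (A2)(ii): boundedness in L^{∞-}
    (hA2ii : ∀ r > (1:ℝ), ∃ B : ℝ, ∀ t : ℝ, 0 ≤ t →
      eLpNorm (X t) (ENNReal.ofReal r) P ≤ ENNReal.ofReal B)
    -- (A2)(iii): relaxed small ball estimate
    (hA2iii : ∃ Δs > (0:ℝ), ∃ γ > (0:ℝ), ∃ lam > (0:ℝ), ∃ μ₀ > (0:ℝ),
      ∃ K₁ > (0:ℝ), ∃ K₂ > (0:ℝ), ∃ K₃ > (0:ℝ),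
      ∀ s : ℝ, 0 ≤ s → ∀ Δ ∈ Ioo (0:ℝ) Δs, ∀ η ∈ Ioo (0:ℝ) (K₃ * Δ ^ γ),
        P {ω | ∀ t ∈ Icc s (s + Δ), |X t ω - X s ω| ≤ η}
          ≤ ENNReal.ofReal (K₁ * Real.exp (-K₂ * η ^ (-lam) * Δ ^ μ₀))) :
    ∀ ε > (0:ℝ), ∀ᵐ ω ∂P,
      Tendsto (fun T : ℝ => T ^ (ε - 1) * ∫ t in Ioc (0:ℝ) T, (f (X t ω)) ^ 2)
        atTop atTop := by

  intro ε hε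
  obtain ⟨K, hK, ηs, hηs, hA1⟩ := hA1i
  obtain ⟨C₀, hC₀, hA1d⟩ := hA1ii
  obtain ⟨ρ, hρ, hA2⟩ := hA2i
  have hX : ∀ t, Measurable (X t) := fun t => hXmeas.comp measurable_prodMk_left
  set α : ℝ := ρ / 2 with hα
  have hα0 : 0 < α := by positivity
  have hρα : ρ = 2 * α := by rw [hα]; ring
  rw [hρα] at hA2
  obtain ⟨Y, hY⟩ := det f K ηs C₀ α hK hηs hC₀ hα0 hA1 hfC1 hA1d
  set E : ℝ := (C₀ + 2 + K) / α + 2 * K + 1 with hE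
  have hE0 : 0 < E := by positivity
  set b : ℝ := ε / 2 / E with hb
  have hb0 : 0 < b := by positivity
  obtain ⟨Δ, hΔ, g3⟩ := good3 P X hA2iii b hb0
  filter_upwards [hXcont, good1 P X hX hA2ii b hb0, good2 P X hX α hα0 hA2 b hb0, g3]
    with ω hc h1 h2 h3
  refine final (fun t => f (X t ω)) (hfC1.continuous.comp_continuousOn hc) ε hε ?_
  have t1 : Tendsto (fun j : ℕ => (j:ℝ) ^ b) atTop atTop :=
    (tendsto_rpow_atTop hb0).comp tendsto_natCast_atTop_atTop
  filter_upwards [h1, h2, h3, t1.eventually_ge_atTop Y] with j k1 k2 k3 k4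
  have := hY _ k4 j (fun t => X t ω) Δ hΔ hc k1 k2 k3
  rw [← Real.rpow_mul (by positivity)] at this
  have e : b * -E = -(ε/2) := by rw [hb]; field_simp
  rwa [e] at this
end

section
/- Let (Ω, F, P) be a probability space, let X : [0,∞) × Ω → ℝ be a jointly measurable stochastic process whose sample paths t ↦ X_t(ω) are continuous for almost every ω, and let f : ℝ → ℝ. Assume: (A1)(i) there exist constants K > 0 and η* > 0 such that for every η ∈ (0, η*) and every x ∈ ℝ one has sup_{y ∈ [x, x+η)} |f(y)| ≥ η^K and sup_{y ∈ (x−η, x]} |f(y)| ≥ η^K; (A1)(ii) f is continuously differentiable and there is a constant C₀ > 0 with |f'(x)| ≤ C₀(1+|x|)^{C₀} for all x ∈ ℝ; (A1)(iii) there exist constants Q > 0, p > 0 and C > 0 such that |f(x)| ≥ Q|x|^p for all |x| ≥ C; (A2)(i) there exists ρ > 0 such that for every r > 1, sup{ (E|X_t − X_s|^r)^{1/r} / (t−s)^ρ : 0 ≤ s < t < s+1 } < ∞; (A2)(iii) there exist positive constants Δ*, γ, λ, μ, K₁, K₂, K₃ such that for every s ≥ 0, every Δ ∈ (0, Δ*)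 and every η ∈ (0, K₃ Δ^γ), P[ sup_{t ∈ [s, s+Δ]} |X_t − X_s| ≤ η ] ≤ K₁ exp(−K₂ η^{−λ} Δ^μ). Then for every ε > 0, almost surely T^{ε−1} ∫₀^T f(X_t)² dt → ∞ as T → ∞. -/
open Set Filter MeasureTheory

lemma aux_f (f : ℝ → ℝ) (hfC1 : ContDiff ℝ 1 f)
    (hA1iii : ∃ Q > (0:ℝ), ∃ p > (0:ℝ), ∃ C > (0:ℝ), ∀ x : ℝ, C ≤ |x| →
      Q * |x| ^ p ≤ |f x|) :
    ∃ c > (0:ℝ), ∀ θ : ℝ, 0 < θ → θ ≤ c → ∀ x y : ℝ, θ ≤ |f x| → |x - y| ≤ c * θ →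
      θ / 2 ≤ |f y| := by
  obtain ⟨Q, hQ, p, hp, C, hC, h⟩ := hA1iii
  obtain ⟨L, hL⟩ : ∃ L : ℝ, ∀ x ∈ Icc (-(C+2)) (C+2), ‖deriv f x‖ ≤ L :=
    isCompact_Icc.exists_bound_of_continuousOn (hfC1.continuous_deriv le_rfl).continuousOn
  have hQC : 0 < Q * C ^ p := by positivity
  set L' := max L 1 with hL'
  have hL1 : 1 ≤ L' := le_max_right _ _
  refine ⟨min (min 1 (Q * C ^ p)) (1 / (2 * L')), by positivity, ?_⟩
  intro θ hθ hθc x y hx hxy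
  set c := min (min 1 (Q * C ^ p)) (1 / (2 * L')) with hc
  have hc1 : c ≤ 1 := (min_le_left _ _).trans (min_le_left _ _)
  have hc2 : c ≤ Q * C ^ p := (min_le_left _ _).trans (min_le_right _ _)
  have hc3 : c ≤ 1 / (2 * L') := min_le_right _ _
  have hc0 : 0 < c := by positivity
  have hd1 : |x - y| ≤ 1 := by nlinarith
  by_cases hxC : |x| ≤ C + 1
  · have hyC : |y| ≤ C + 2 := by
      have := abs_sub_abs_le_abs_sub y x
      rw [abs_sub_comm] at this; linarith
    have hxC' : |x| ≤ C + 2 := by linarith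
    have := Convex.norm_image_sub_le_of_norm_deriv_le (f := f) (C := L') (s := Icc (-(C+2)) (C+2))
      (fun z _ => (hfC1.differentiable (by norm_num)).differentiableAt)
      (fun z hz => (hL z hz).trans (le_max_left _ _)) (convex_Icc _ _)
      (x := y) (y := x) (abs_le.mp hyC) (abs_le.mp hxC')
    rw [Real.norm_eq_abs, Real.norm_eq_abs] at this
    have h2 : L' * |x - y| ≤ θ / 2 := by
      calc L' * |x - y| ≤ L' * (1 / (2 * L') * θ) := by gcongr; exact hxy.trans (by gcongr)
        _ = θ / 2 := by field_simp
    have := abs_sub_abs_le_abs_sub (f x) (f y)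
    linarith
  · push Not at hxC
    have hyC : C ≤ |y| := by
      have := abs_sub_abs_le_abs_sub x y
      linarith
    have h3 := h y hyC
    have : Q * C ^ p ≤ Q * |y| ^ p := by gcongr
    linarith

lemma aux_sup (f : ℝ → ℝ) (a : ℝ) (ha : 0 < a) (S : Set ℝ)
    (h : ((a : ℝ) : EReal) ≤ ⨆ y ∈ S, ((|f y| : ℝ) : EReal)) : ∃ y ∈ S, a / 2 ≤ |f y| := by
  have h1 : ((a/2 : ℝ) : EReal) < ((a : ℝ) : EReal) := by
    rw [EReal.coe_lt_coe_iff]; linarith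
  have h2 := h1.trans_le h
  rw [lt_iSup_iff] at h2
  obtain ⟨y, hy⟩ := h2
  rw [lt_iSup_iff] at hy
  obtain ⟨hyS, hy⟩ := hy
  exact ⟨y, hyS, (EReal.coe_lt_coe_iff.mp hy).le⟩

lemma aux_moment {Ω : Type*} [MeasurableSpace Ω] (P : Measure Ω)
    {ι : Type*} [Countable ι] (Y : ι → Ω → ℝ) (hY : ∀ i, Measurable (Y i))
    (b w : ι → ℝ) (hb : ∀ i, 0 < b i) (hw : ∀ i, 0 < w i) (hws : Summable w) (r : ℝ) (hr : 0 < r)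
    (h : ∀ i, eLpNorm (Y i) (ENNReal.ofReal r) P ≤ ENNReal.ofReal (b i)) :
    ∀ᵐ ω ∂P, ∃ M : ℝ, 0 ≤ M ∧ ∀ i, |Y i ω| ^ r ≤ M * (b i ^ r / w i) := by
  have hm : ∀ i, Measurable (fun ω => ENNReal.ofReal (w i / b i ^ r) * ENNReal.ofReal (|Y i ω| ^ r)) := by
    intro i
    have := hY i
    fun_prop
  have hle : ∀ i, ∫⁻ ω, ENNReal.ofReal (|Y i ω| ^ r) ∂P ≤ ENNReal.ofReal (b i ^ r) := by
    intro i
    have h1 := h i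
    rw [eLpNorm_eq_lintegral_rpow_enorm_toReal (by simpa using hr) (by simp), ENNReal.toReal_ofReal hr.le] at h1
    have h2 := ENNReal.rpow_le_rpow h1 hr.le
    rw [← ENNReal.rpow_mul, one_div, inv_mul_cancel₀ hr.ne', ENNReal.rpow_one,
      ENNReal.ofReal_rpow_of_nonneg (hb i).le hr.le] at h2
    refine le_trans (le_of_eq ?_) h2
    congr 1; ext ω
    rw [Real.enorm_eq_ofReal_abs, ENNReal.ofReal_rpow_of_nonneg (abs_nonneg _) hr.le]
  have hfin : ∫⁻ ω, ∑' i, ENNReal.ofReal (w i / b i ^ r) * ENNReal.ofReal (|Y i ω| ^ r) ∂P ≠ ⊤ := by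
    rw [lintegral_tsum (fun i => (hm i).aemeasurable)]
    refine ne_top_of_le_ne_top ?_ (ENNReal.tsum_le_tsum (g := fun i => ENNReal.ofReal (w i)) ?_)
    · exact hws.tsum_ofReal_ne_top
    · intro i
      rw [lintegral_const_mul' _ _ (by simp)]
      have hbi : 0 < b i ^ r := Real.rpow_pos_of_pos (hb i) r
      calc _ ≤ ENNReal.ofReal (w i / b i ^ r) * ENNReal.ofReal (b i ^ r) := by gcongr; exact hle i
        _ = ENNReal.ofReal (w i) := by
          rw [← ENNReal.ofReal_mul (div_pos (hw i) hbi).le, div_mul_cancel₀ _ hbi.ne']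
  filter_upwards [ae_lt_top' (Measurable.tsum hm).aemeasurable hfin] with ω hω
  refine ⟨(∑' i, ENNReal.ofReal (w i / b i ^ r) * ENNReal.ofReal (|Y i ω| ^ r)).toReal,
    ENNReal.toReal_nonneg, fun i => ?_⟩
  have h1 := ENNReal.toReal_mono hω.ne (ENNReal.le_tsum (f := fun i => ENNReal.ofReal (w i / b i ^ r) * ENNReal.ofReal (|Y i ω| ^ r)) i)
  have hbi : 0 < b i ^ r := Real.rpow_pos_of_pos (hb i) r
  have hwi := hw i
  rw [ENNReal.toReal_mul, ENNReal.toReal_ofReal (by positivity), ENNReal.toReal_ofReal (by positivity)] at h1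
  calc |Y i ω| ^ r = (w i / b i ^ r * |Y i ω| ^ r) * (b i ^ r / w i) := by field_simp
    _ ≤ _ := by gcongr

lemma aux_chain (x : ℝ → ℝ) (hx : ContinuousOn x (Ici 0)) (n : ℕ) (G a : ℝ) (hG : 0 ≤ G)
    (ha0 : 0 < a) (ha1 : a < 1)
    (h : ∀ k i : ℕ, 1 ≤ k → ((i:ℝ) + 1) ≤ 2 ^ k * (n + 1) →
      |x (((i:ℝ) + 1) / 2 ^ k) - x ((i:ℝ) / 2 ^ k)| ≤ G * a ^ k)
    (t : ℝ) (ht0 : 0 ≤ t) (ht : t < n + 1) (m : ℕ) :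
    |x ((⌊2 ^ m * t⌋₊ : ℝ) / 2 ^ m) - x t| ≤ G * a ^ m / (1 - a) := by
  have hlim : Tendsto (fun k : ℕ => (⌊(2:ℝ) ^ k * t⌋₊ : ℝ) / 2 ^ k) atTop (nhds t) := by
    have h1 := (tendsto_nat_floor_mul_div_atTop (R := ℝ) ht0).comp
      (tendsto_pow_atTop_atTop_of_one_lt (one_lt_two : (1:ℝ) < 2))
    refine h1.congr fun k => ?_
    simp [mul_comm]
  have hlim2 : Tendsto (fun k : ℕ => x ((⌊(2:ℝ) ^ k * t⌋₊ : ℝ) / 2 ^ k)) atTop (nhds (x t)) := by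
    refine (hx t ht0).tendsto.comp (tendsto_nhdsWithin_iff.mpr ⟨hlim, Eventually.of_forall fun k => ?_⟩)
    simp only [mem_Ici]; positivity
  refine dist_le_of_le_geometric_of_tendsto a G ha1 (fun k => ?_) hlim2 m
  rw [dist_comm, Real.dist_eq]
  set q := ⌊(2:ℝ) ^ k * t⌋₊ with hq
  set q' := ⌊(2:ℝ) ^ (k+1) * t⌋₊ with hq'
  have h1 : (q:ℝ) ≤ 2 ^ k * t := Nat.floor_le (by positivity)
  have h2 : 2 ^ k * t < q + 1 := Nat.lt_floor_add_one _
  have h3 : (q':ℝ) ≤ 2 ^ (k+1) * t := Nat.floor_le (by positivity)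
  have h4 : 2 ^ (k+1) * t < q' + 1 := Nat.lt_floor_add_one _
  have h5 : q' < 2 * q + 2 := by
    have : (q':ℝ) < 2 * q + 2 := by rw [pow_succ] at h3; linarith
    exact_mod_cast this
  have h6 : 2 * q < q' + 1 := by
    have : 2 * (q:ℝ) < q' + 1 := by rw [pow_succ] at h4; linarith
    exact_mod_cast this
  have e : (q:ℝ) / 2 ^ k = ((2 * q : ℕ) : ℝ) / 2 ^ (k+1) := by
    push_cast; rw [pow_succ]; field_simp
  rw [e]
  obtain h7 | h7 : q' = 2 * q ∨ q' = 2 * q + 1 := by omega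
  · rw [h7]; simp; positivity
  · have := h (k+1) (2*q) (by omega) (by
      have : (q':ℝ) = ((2 * q : ℕ) : ℝ) + 1 := by rw [h7]; push_cast; ring
      rw [← this]; refine h3.trans ?_
      gcongr)
    rw [h7]; push_cast at this ⊢
    refine this.trans ?_
    gcongr G * ?_
    exact pow_le_pow_of_le_one ha0.le ha1.le (by omega)

lemma aux_ball {Ω : Type*} [MeasurableSpace Ω] (P : Measure Ω) (X : ℝ → Ω → ℝ)
    (hA2iii : ∃ Δs > (0:ℝ), ∃ γ > (0:ℝ), ∃ lam > (0:ℝ), ∃ μ₀ > (0:ℝ),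
      ∃ K₁ > (0:ℝ), ∃ K₂ > (0:ℝ), ∃ K₃ > (0:ℝ),
      ∀ s : ℝ, 0 ≤ s → ∀ Δ ∈ Ioo (0:ℝ) Δs, ∀ η ∈ Ioo (0:ℝ) (K₃ * Δ ^ γ),
        P {ω | ∀ t ∈ Icc s (s + Δ), |X t ω - X s ω| ≤ η}
          ≤ ENNReal.ofReal (K₁ * Real.exp (-K₂ * η ^ (-lam) * Δ ^ μ₀))) (δ : ℝ) (hδ : 0 < δ) :
    ∀ᵐ ω ∂P, ∀ᶠ n : ℕ in atTop, ∃ t : ℝ, (n:ℝ) ≤ t ∧ t < n + 1 ∧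
      (n:ℝ) ^ (-δ) < |X t ω - X n ω| := by
  obtain ⟨Δs, hΔs, γ, hγ, lam, hlam, μ₀, hμ, K₁, hK₁, K₂, hK₂, K₃, hK₃, h⟩ := hA2iii
  set Δ := min Δs 1 / 2 with hΔ
  have hm : 0 < min Δs 1 := by positivity
  have hΔ0 : 0 < Δ := by positivity
  have hΔ1 : Δ < 1 := by have := min_le_right Δs 1; linarith
  have hΔ2 : Δ < Δs := by have := min_le_left Δs 1; linarith
  have hev : ∀ᶠ n : ℕ in atTop, (n:ℝ) ^ (-δ) < K₃ * Δ ^ γ :=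
    ((tendsto_rpow_neg_atTop hδ).comp tendsto_natCast_atTop_atTop).eventually_lt_const (by positivity)
  obtain ⟨n0, hn0⟩ := eventually_atTop.mp (hev.and (eventually_ge_atTop 1))
  set c := K₂ * Δ ^ μ₀ with hc
  have hc0 : 0 < c := by positivity
  obtain ⟨k, hk⟩ := exists_nat_gt (2 / (δ * lam))
  have hk' : 2 < δ * lam * k := by
    rw [div_lt_iff₀ (by positivity)] at hk; linarith
  have hsum : Summable (fun n : ℕ => K₁ * (k.factorial / c ^ k) * (n:ℝ) ^ (-(δ * lam * k))) :=
    (Real.summable_nat_rpow.mpr (by linarith)).mul_left _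
  have := ae_eventually_notMem (μ := P)
    (s := fun n : ℕ => {ω | n0 ≤ n ∧ ∀ t ∈ Icc (n:ℝ) (n + Δ), |X t ω - X n ω| ≤ (n:ℝ) ^ (-δ)}) (by
      refine ne_top_of_le_ne_top hsum.tsum_ofReal_ne_top (ENNReal.tsum_le_tsum fun n => ?_)
      by_cases hn : n0 ≤ n
      · obtain ⟨h1, h2⟩ := hn0 n hn
        have hnp : (0:ℝ) < n := by exact_mod_cast h2
        simp only [hn, true_and]
        refine (h n hnp.le Δ ⟨hΔ0, hΔ2⟩ _ ⟨by positivity, h1⟩).trans (ENNReal.ofReal_le_ofReal ?_)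
        rw [mul_assoc K₁ (k.factorial / c ^ k : ℝ)]
        gcongr K₁ * ?_
        have e : -K₂ * ((n:ℝ) ^ (-δ)) ^ (-lam) * Δ ^ μ₀ = -(c * (n:ℝ) ^ (δ * lam)) := by
          rw [← Real.rpow_mul hnp.le, hc]; ring_nf
        rw [e, Real.exp_neg]
        have hy : 0 < c * (n:ℝ) ^ (δ * lam) := by positivity
        have h3 := Real.pow_div_factorial_le_exp _ hy.le k
        have hf : (0:ℝ) < k.factorial := by positivity
        refine (inv_anti₀ (by positivity) h3).trans (le_of_eq ?_)
        rw [mul_pow, ← Real.rpow_mul_natCast hnp.le, Real.rpow_neg hnp.le]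
        field_simp
      · simp [hn])
  filter_upwards [this] with ω hω
  filter_upwards [hω, eventually_ge_atTop n0] with n hn hn'
  simp only [hn', true_and, not_forall, not_le] at hn
  obtain ⟨t, ht, h1⟩ := hn
  exact ⟨t, ht.1, by linarith [ht.2], h1⟩

lemma aux_holder {Ω : Type*} [MeasurableSpace Ω] (P : Measure Ω) (X : ℝ → Ω → ℝ)
    (hXmeas : Measurable (Function.uncurry X)) (ρ : ℝ) (hρ : 0 < ρ)
    (h : ∀ r > (1:ℝ), ∃ B : ℝ, ∀ s t : ℝ, 0 ≤ s → s < t → t < s + 1 →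
      eLpNorm (fun ω => X t ω - X s ω) (ENNReal.ofReal r) P
        ≤ ENNReal.ofReal (B * (t - s) ^ ρ)) (δ : ℝ) (hδ : 0 < δ) :
    ∀ᵐ ω ∂P, ∃ G : ℝ, 0 ≤ G ∧ ∀ n k i : ℕ, 1 ≤ k → ((i:ℝ) + 1) ≤ 2 ^ k * (n + 1) →
      |X (((i:ℝ) + 1) / 2 ^ k) ω - X ((i:ℝ) / 2 ^ k) ω|
        ≤ (G * ((n:ℝ) + 1) ^ δ) * ((2:ℝ) ^ (-(ρ / 2))) ^ k := by
  set r := max 2 (max (6 / ρ) (2 / δ)) with hr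
  have hr2 : 2 ≤ r := le_max_left _ _
  have hr0 : 0 < r := by linarith
  have hrρ : 6 ≤ ρ * r := by
    have : 6 / ρ ≤ r := (le_max_left _ _).trans (le_max_right _ _)
    rw [div_le_iff₀ hρ] at this; linarith
  have hrδ : 2 ≤ δ * r := by
    have : 2 / δ ≤ r := (le_max_right _ _).trans (le_max_right _ _)
    rw [div_le_iff₀ hδ] at this; linarith
  obtain ⟨B, hB⟩ := h r (by linarith)
  set B' := max B 1 with hB'
  have hB'0 : 0 < B' := by positivity
  have hm : ∀ t, Measurable (X t) := fun t => hXmeas.of_uncurry_left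
  have hws : Summable (fun q : ℕ × ℕ => (1/2:ℝ) ^ q.1 * (1 / ((q.2:ℝ) + 1) ^ 2)) := by
    have h1 : Summable (fun i : ℕ => 1 / ((i:ℝ) + 1) ^ 2) := by
      have := (summable_nat_add_iff (f := fun i : ℕ => 1 / (i:ℝ) ^ 2) 1).mpr
        (Real.summable_one_div_nat_pow.mpr one_lt_two)
      simpa using this
    exact Summable.mul_of_nonneg (f := fun k : ℕ => (1/2:ℝ) ^ k)
      (g := fun i : ℕ => 1 / ((i:ℝ) + 1) ^ 2) summable_geometric_two h1
      (fun k => by simp only [Pi.zero_apply]; positivity)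
      (fun k => by simp only [Pi.zero_apply]; positivity)
  have key := aux_moment P (fun q : ℕ × ℕ => fun ω => X (((q.2:ℝ) + 1) / 2 ^ (q.1+1)) ω
      - X ((q.2:ℝ) / 2 ^ (q.1+1)) ω) (fun q => (hm _).sub (hm _))
      (fun q => B' * (1 / 2 ^ (q.1+1)) ^ ρ) _ (fun q => by positivity) (fun q => by positivity)
      hws r hr0 (by
        intro q
        have h2 : (1:ℝ) / 2 ^ (q.1+1) < 1 := by
          rw [div_lt_one (by positivity)]
          exact one_lt_pow₀ one_lt_two (by omega)
        have e : ((q.2:ℝ) + 1) / 2 ^ (q.1+1) = (q.2:ℝ) / 2 ^ (q.1+1) + 1 / 2 ^ (q.1+1) := by ring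
        have h1 := hB ((q.2:ℝ) / 2 ^ (q.1+1)) (((q.2:ℝ) + 1) / 2 ^ (q.1+1)) (by positivity)
          (by rw [e]; have : (0:ℝ) < 1 / 2 ^ (q.1+1) := by positivity
              linarith) (by rw [e]; linarith)
        refine h1.trans (ENNReal.ofReal_le_ofReal ?_)
        rw [e, add_sub_cancel_left]
        gcongr
        exact le_max_left _ _)
  filter_upwards [key] with ω hω
  obtain ⟨M, hM0, hM⟩ := hω
  refine ⟨M ^ (1/r) * B', by positivity, fun n k i hk hi => ?_⟩
  obtain ⟨k, rfl⟩ : ∃ k', k = k' + 1 := ⟨k - 1, by omega⟩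
  have h1 := hM (k, i)
  simp only at h1
  set u : ℝ := 2 ^ (k+1) with hu
  have hu1 : 1 ≤ u := one_le_pow₀ one_le_two
  have hu0 : 0 < u := by linarith
  have hn1 : (1:ℝ) ≤ n + 1 := by have := Nat.cast_nonneg (α := ℝ) n; linarith
  have hn0 : (0:ℝ) < n + 1 := by linarith
  have e1 : ((2:ℝ) ^ (-(ρ / 2))) ^ (k+1) = u ^ (-(ρ/2)) := by
    rw [hu, ← Real.rpow_natCast, ← Real.rpow_mul (by norm_num), ← Real.rpow_natCast,
      ← Real.rpow_mul (by norm_num), mul_comm]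
  rw [e1, ← Real.rpow_le_rpow_iff (abs_nonneg _) (by positivity) hr0]
  refine h1.trans ?_
  have e2 : (M ^ (1 / r) * B' * ((n:ℝ) + 1) ^ δ * u ^ (-(ρ / 2))) ^ r
      = M * (B' ^ r * (((n:ℝ)+1) ^ (δ * r) * u ^ (-(ρ/2) * r))) := by
    rw [Real.mul_rpow (by positivity) (by positivity), Real.mul_rpow (by positivity) (by positivity),
      Real.mul_rpow (by positivity) (by positivity), ← Real.rpow_mul hM0, ← Real.rpow_mul hn0.le,
      ← Real.rpow_mul hu0.le, one_div, inv_mul_cancel₀ hr0.ne', Real.rpow_one]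
    ring
  rw [e2]
  gcongr M * ?_
  have e3 : (B' * (1 / u) ^ ρ) ^ r = B' ^ r * u ^ (-ρ * r) := by
    rw [Real.mul_rpow (by positivity) (by positivity), one_div, Real.inv_rpow hu0.le,
      ← Real.rpow_neg hu0.le, ← Real.rpow_mul hu0.le]
  rw [e3, mul_div_assoc]
  gcongr B' ^ r * ?_
  have e4 : u ^ (-ρ * r) / ((1 / 2) ^ k * (1 / ((i:ℝ) + 1) ^ 2))
      = u ^ (-ρ * r) * (2 ^ k * ((i:ℝ) + 1) ^ 2) := by
    rw [one_div_pow]; field_simp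
  rw [e4]
  calc u ^ (-ρ * r) * (2 ^ k * ((i:ℝ) + 1) ^ 2)
      ≤ u ^ (-ρ * r) * (u * (u * (n + 1)) ^ 2) := by
        gcongr
        rw [hu]; exact pow_le_pow_right₀ one_le_two (by omega)
    _ = ((n:ℝ)+1) ^ (2:ℝ) * (u ^ (-ρ * r) * u ^ (3:ℝ)) := by
        rw [show (2:ℝ) = (2:ℕ) by norm_num, show (3:ℝ) = (3:ℕ) by norm_num, Real.rpow_natCast, Real.rpow_natCast]; ring
    _ = ((n:ℝ)+1) ^ (2:ℝ) * (u ^ (-ρ * r + 3)) := by rw [Real.rpow_add hu0]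
    _ ≤ _ := by
      gcongr
      linarith

lemma aux_block (f : ℝ → ℝ) (hf : Continuous f) (c : ℝ) (hc : 0 < c)
    (hcf : ∀ θ : ℝ, 0 < θ → θ ≤ c → ∀ x y : ℝ, θ ≤ |f x| → |x - y| ≤ c * θ → θ / 2 ≤ |f y|)
    (K : ℝ) (hK : 0 < K) (ηs : ℝ) (hηs : 0 < ηs)
    (hA1i : ∀ η ∈ Ioo (0:ℝ) ηs, ∀ x : ℝ,
      (((η ^ K : ℝ) : EReal) ≤ ⨆ y ∈ Ico x (x + η), ((|f y| : ℝ) : EReal)) ∧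
      (((η ^ K : ℝ) : EReal) ≤ ⨆ y ∈ Ioc (x - η) x, ((|f y| : ℝ) : EReal)))
    (x : ℝ → ℝ) (hx : ContinuousOn x (Ici 0)) (α δ G : ℝ) (hα : 0 < α) (hδ : 0 < δ) (hG : 0 ≤ G)
    (hH : ∀ n k i : ℕ, 1 ≤ k → ((i:ℝ) + 1) ≤ 2 ^ k * (n + 1) →
      |x (((i:ℝ) + 1) / 2 ^ k) - x ((i:ℝ) / 2 ^ k)|
        ≤ (G * ((n:ℝ) + 1) ^ δ) * ((2:ℝ) ^ (-α)) ^ k)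
    (hball : ∀ᶠ n : ℕ in atTop, ∃ t : ℝ, (n:ℝ) ≤ t ∧ t < n + 1 ∧ (n:ℝ) ^ (-δ) < |x t - x n|) :
    ∀ᶠ n : ℕ in atTop, (1/32) * (n:ℝ) ^ (-(δ * ((K + 3) / α + 2 * K)))
      ≤ ∫ t in Ioc (n:ℝ) (n+1), f (x t) ^ 2 := by
  set a : ℝ := 2 ^ (-α) with ha
  have ha0 : 0 < a := by positivity
  have ha1 : a < 1 := Real.rpow_lt_one_of_one_lt_of_neg one_lt_two (by linarith)
  have ha2 : 0 < 1 - a := by linarith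
  set D := 2 * G * 2 ^ δ / (1 - a) with hD
  have hD0 : 0 ≤ D := by positivity
  have htend : ∀ e : ℝ, 0 < e → Tendsto (fun n : ℕ => (n:ℝ) ^ (-e)) atTop (nhds 0) := fun e he =>
    (tendsto_rpow_neg_atTop he).comp tendsto_natCast_atTop_atTop
  have ev1 := (htend δ hδ).eventually_lt_const hηs
  have ev2 := (htend (δ * K) (by positivity)).eventually_lt_const (show 0 < 2 * c by positivity)
  have ev3 : ∀ᶠ n : ℕ in atTop, D * (n:ℝ) ^ (-(2 * δ)) < c / 2 := by
    have := (htend (2 * δ) (by positivity)).const_mul D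
    rw [mul_zero] at this
    exact this.eventually_lt_const (by positivity)
  filter_upwards [hball, ev1, ev2, ev3, eventually_ge_atTop 1] with n hb h1 h2 h3 hn
  have hn1 : (1:ℝ) ≤ n := by exact_mod_cast hn
  have hn0 : (0:ℝ) < n := by linarith
  set η : ℝ := (n:ℝ) ^ (-δ) with hη
  have hη0 : 0 < η := by positivity
  have hηK : η ^ K = (n:ℝ) ^ (-(δ * K)) := by rw [hη, ← Real.rpow_mul hn0.le]; ring_nf
  obtain ⟨t1, ht1, ht1', hgt⟩ := hb
  obtain ⟨t0, ht0, ht0', hft0⟩ : ∃ t0, (n:ℝ) ≤ t0 ∧ t0 < n + 1 ∧ η ^ K / 2 ≤ |f (x t0)| := by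
    obtain ⟨y, hy, hfy⟩ : ∃ y ∈ uIcc (x n) (x t1), η ^ K / 2 ≤ |f y| := by
      obtain ⟨hA, hB⟩ := hA1i η ⟨hη0, h1⟩ (x n)
      rcases lt_abs.mp hgt with h | h
      · obtain ⟨y, hy, hfy⟩ := aux_sup f _ (by positivity) _ hA
        exact ⟨y, by rw [uIcc_of_le (by linarith)]; exact ⟨hy.1, by linarith [hy.2]⟩, hfy⟩
      · obtain ⟨y, hy, hfy⟩ := aux_sup f _ (by positivity) _ hB
        exact ⟨y, by rw [uIcc_of_ge (by linarith)]; exact ⟨by linarith [hy.1], hy.2⟩, hfy⟩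
    have hcon : ContinuousOn x (uIcc (n:ℝ) t1) := hx.mono (by
      rw [uIcc_of_le ht1]; intro z hz; exact hn0.le.trans hz.1)
    obtain ⟨t0, ht0, rfl⟩ := intermediate_value_uIcc hcon hy
    rw [uIcc_of_le ht1] at ht0
    exact ⟨t0, ht0.1, by linarith [ht0.2], hfy⟩
  set θ := η ^ K / 2 with hθ
  have hθ0 : 0 < θ := by positivity
  have hθc : θ ≤ c := by rw [hθ, hηK]; linarith
  set β := δ * (K + 3) / α with hβ
  have hβ0 : 0 < β := by positivity
  obtain ⟨m', hm1, hm2⟩ := exists_nat_pow_near (Real.one_le_rpow hn1 hβ0.le) (one_lt_two : (1:ℝ) < 2)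
  set m := m' + 1 with hm
  have hm3 : (2:ℝ) ^ m ≤ 2 * (n:ℝ) ^ β := by rw [hm, pow_succ]; linarith
  set u : ℝ := 2 ^ m with hu
  have hu0 : 0 < u := by positivity
  have ham : a ^ m ≤ (n:ℝ) ^ (-(δ * (K + 3))) := by
    have : a ^ m = u ^ (-α) := by
      rw [hu, ha, ← Real.rpow_natCast, ← Real.rpow_mul (by norm_num), ← Real.rpow_natCast,
        ← Real.rpow_mul (by norm_num), mul_comm]
    rw [this]
    calc u ^ (-α) ≤ ((n:ℝ) ^ β) ^ (-α) :=
          Real.rpow_le_rpow_of_nonpos (by positivity) hm2.le (by linarith)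
      _ = _ := by rw [← Real.rpow_mul hn0.le, hβ]; congr 1; field_simp
  have hosc : 2 * ((G * ((n:ℝ) + 1) ^ δ) * a ^ m / (1 - a)) ≤ c * θ := by
    calc 2 * ((G * ((n:ℝ) + 1) ^ δ) * a ^ m / (1 - a))
        ≤ 2 * ((G * (2 * (n:ℝ)) ^ δ) * (n:ℝ) ^ (-(δ * (K + 3))) / (1 - a)) := by
          gcongr; linarith
      _ = D * ((n:ℝ) ^ δ * (n:ℝ) ^ (-(δ * (K + 3)))) := by
          rw [Real.mul_rpow (by norm_num) hn0.le, hD]; ring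
      _ = D * ((n:ℝ) ^ (-(2 * δ)) * (n:ℝ) ^ (-(δ * K))) := by
          rw [← Real.rpow_add hn0, ← Real.rpow_add hn0]; ring_nf
      _ = D * (n:ℝ) ^ (-(2 * δ)) * η ^ K := by rw [hηK]; ring
      _ ≤ c / 2 * η ^ K := by gcongr
      _ = c * θ := by rw [hθ]; ring
  set q := ⌊u * t0⌋₊ with hq
  have hch := aux_chain x hx n (G * ((n:ℝ) + 1) ^ δ) a (by positivity) ha0 ha1 (hH n)
  have ht00 : 0 ≤ t0 := by linarith
  have hq1 : (q:ℝ) ≤ u * t0 := Nat.floor_le (by positivity)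
  have hq2 : u * t0 < q + 1 := Nat.lt_floor_add_one _
  have hq3 : (n:ℝ) ≤ q / u := by
    rw [le_div_iff₀ hu0]
    have : n * 2 ^ m ≤ q := by
      rw [hq]; apply Nat.le_floor; push_cast
      rw [mul_comm]; gcongr
    rw [hu]; exact_mod_cast this
  have hq4 : ((q:ℝ) + 1) / u ≤ n + 1 := by
    rw [div_le_iff₀ hu0]
    have : q < (n + 1) * 2 ^ m := by
      rw [hq, Nat.floor_lt (by positivity)]; push_cast
      rw [mul_comm]; gcongr
    have : q + 1 ≤ (n + 1) * 2 ^ m := this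
    rw [hu]; exact_mod_cast this
  have hJ : ∀ t ∈ Ioo ((q:ℝ) / u) (((q:ℝ) + 1) / u), θ / 2 ≤ |f (x t)| := by
    intro t ht
    refine hcf θ hθ0 hθc (x t0) (x t) hft0 ?_
    have ht0n : 0 ≤ t := by linarith [ht.1]
    have hA := hch t0 ht00 ht0' m
    have hB := hch t ht0n (by linarith [ht.2]) m
    have : ⌊u * t⌋₊ = q := by
      rw [Nat.floor_eq_iff (by positivity)]
      have h1 := ht.1
      have h2 := ht.2
      rw [div_lt_iff₀ hu0] at h1
      rw [lt_div_iff₀ hu0] at h2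
      constructor <;> linarith
    rw [← hu, this] at hB
    rw [← hu, ← hq, abs_sub_comm] at hA
    have := abs_sub_le (x t0) (x (q / u)) (x t)
    linarith
  have hint : IntegrableOn (fun t => f (x t) ^ 2) (Ioc (n:ℝ) (n+1)) := by
    have : ContinuousOn (fun t => f (x t) ^ 2) (Icc (n:ℝ) (n+1)) :=
      ((hf.comp_continuousOn hx).pow 2).mono (fun z hz => hn0.le.trans hz.1)
    exact this.integrableOn_Icc.mono_set Ioc_subset_Icc_self
  have hsub : Ioo ((q:ℝ) / u) (((q:ℝ) + 1) / u) ⊆ Ioc (n:ℝ) (n+1) := fun z hz =>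
    ⟨by linarith [hz.1], by linarith [hz.2]⟩
  calc (1/32) * (n:ℝ) ^ (-(δ * ((K + 3) / α + 2 * K)))
      = (1/32) * ((n:ℝ) ^ (-β) * (η ^ K) ^ 2) := by
        rw [hηK, ← Real.rpow_mul_natCast hn0.le, ← Real.rpow_add hn0, hβ]; congr 2; push_cast; ring
    _ = 1 / (2 * (n:ℝ) ^ β) * (θ / 2) ^ 2 := by
        rw [Real.rpow_neg hn0.le, hθ]; field_simp; norm_num
    _ ≤ 1 / u * (θ / 2) ^ 2 := by gcongr
    _ = ∫ t in Ioo ((q:ℝ) / u) (((q:ℝ) + 1) / u), (θ / 2) ^ 2 := by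
        rw [setIntegral_const, smul_eq_mul, Real.volume_real_Ioo_of_le (by gcongr; linarith)]
        ring
    _ ≤ ∫ t in Ioo ((q:ℝ) / u) (((q:ℝ) + 1) / u), f (x t) ^ 2 := by
        refine setIntegral_mono_on (integrableOn_const (by simp)) (hint.mono_set hsub) measurableSet_Ioo ?_
        intro t ht
        rw [← sq_abs (f (x t))]
        have := hJ t ht
        gcongr
    _ ≤ _ := setIntegral_mono_set hint (Eventually.of_forall fun t => sq_nonneg _) hsub.eventuallyLE

lemma aux_final (g : ℝ → ℝ) (hg : ContinuousOn g (Ici 0)) (hg0 : ∀ t, 0 ≤ g t) (ε : ℝ) (hε : 0 < ε)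
    (h : ∀ᶠ n : ℕ in atTop, (1/32) * (n:ℝ) ^ (-(ε / 2)) ≤ ∫ t in Ioc (n:ℝ) (n+1), g t) :
    Tendsto (fun T : ℝ => T ^ (ε - 1) * ∫ t in Ioc (0:ℝ) T, g t) atTop atTop := by
  obtain ⟨n0, hn0⟩ := eventually_atTop.mp (h.and (eventually_ge_atTop 1))
  have hint : ∀ a b : ℝ, 0 ≤ a → IntegrableOn g (Ioc a b) := fun a b ha =>
    (hg.mono (fun z hz => ha.trans hz.1) : ContinuousOn g (Icc a b)).integrableOn_Icc.mono_set
      Ioc_subset_Icc_self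
  have hlow : ∀ T : ℝ, 1 ≤ T → ∀ j : ℕ, ((n0 + j : ℕ) : ℝ) ≤ T →
      (j:ℝ) * ((1/32) * T ^ (-(ε/2))) ≤ ∫ t in Ioc (0:ℝ) ((n0 + j : ℕ) : ℝ), g t := by
    intro T hT j
    induction j with
    | zero => intro _; simp only [Nat.cast_zero, zero_mul]; exact integral_nonneg hg0
    | succ j ih =>
      intro hj
      have hj' : ((n0 + j : ℕ) : ℝ) + 1 ≤ T := by push_cast at hj ⊢; linarith
      have h1 := ih (by linarith)
      obtain ⟨h2, h3⟩ := hn0 (n0 + j) (by omega)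
      have h3' : (0:ℝ) < ((n0 + j : ℕ) : ℝ) := by exact_mod_cast h3
      have h4 : T ^ (-(ε/2)) ≤ ((n0 + j : ℕ) : ℝ) ^ (-(ε/2)) :=
        Real.rpow_le_rpow_of_nonpos h3' (by linarith) (by linarith)
      have e : Ioc (0:ℝ) ((n0 + (j+1) : ℕ) : ℝ) = Ioc (0:ℝ) ((n0 + j : ℕ) : ℝ) ∪
          Ioc ((n0 + j : ℕ) : ℝ) (((n0 + j : ℕ) : ℝ) + 1) := by
        rw [Ioc_union_Ioc_eq_Ioc h3'.le (by linarith)]; push_cast; ring_nf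
      rw [e, setIntegral_union (Ioc_disjoint_Ioc_of_le le_rfl) measurableSet_Ioc
        (hint _ _ le_rfl) (hint _ _ h3'.le)]
      push_cast at *
      linarith
  have hT : Tendsto (fun T : ℝ => (1/64) * T ^ (ε/2)) atTop atTop :=
    (tendsto_rpow_atTop (by positivity)).const_mul_atTop (by norm_num)
  refine tendsto_atTop_mono' _ ?_ hT
  filter_upwards [eventually_ge_atTop (2 * ((n0:ℝ) + 1))] with T hT
  have hn00 := Nat.cast_nonneg (α := ℝ) n0
  have hT0 : 0 < T := by linarith
  have hN : n0 ≤ ⌊T⌋₊ := Nat.le_floor (by linarith)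
  obtain ⟨j, hj⟩ := Nat.exists_eq_add_of_le hN
  have h1 : (⌊T⌋₊ : ℝ) ≤ T := Nat.floor_le hT0.le
  have h2 : T < ⌊T⌋₊ + 1 := Nat.lt_floor_add_one _
  rw [hj] at h1 h2
  have h3 := hlow T (by linarith) j h1
  have h4 : ∫ t in Ioc (0:ℝ) ((n0 + j : ℕ) : ℝ), g t ≤ ∫ t in Ioc (0:ℝ) T, g t :=
    setIntegral_mono_set (hint _ _ le_rfl) (Eventually.of_forall hg0)
      (Ioc_subset_Ioc_right h1).eventuallyLE
  have h5 : T / 2 ≤ j := by push_cast at h2; linarith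
  calc (1/64) * T ^ (ε/2) = T ^ (ε - 1) * (T / 2 * ((1/32) * T ^ (-(ε/2)))) := by
        have : T ^ (ε/2) = T ^ (ε - 1) * T ^ (1:ℝ) * T ^ (-(ε/2)) := by
          rw [← Real.rpow_add hT0, ← Real.rpow_add hT0]; ring_nf
        rw [this, Real.rpow_one]; ring
    _ ≤ T ^ (ε - 1) * (j * ((1/32) * T ^ (-(ε/2)))) := by gcongr
    _ ≤ _ := by gcongr; exact h3.trans h4

/-- the divergence theorem without the `L^{∞-}` boundedness (A2)(ii), replaced
by the polynomial lower growth condition (A1)(iii) `|f(x)| ≥ Q|x|^p` for `|x| ≥ C`: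
for every `ε > 0`, almost surely `T^{ε-1} ∫₀^T f(X_t)² dt → ∞` as `T → ∞`. -/
theorem stmt_4
    {Ω : Type*} [MeasurableSpace Ω] (P : Measure Ω) [IsProbabilityMeasure P]
    (X : ℝ → Ω → ℝ) (f : ℝ → ℝ)
    (hXmeas : Measurable (Function.uncurry X))
    (hXcont : ∀ᵐ ω ∂P, ContinuousOn (fun t => X t ω) (Ici 0))
    -- (A1)(i)
    (hA1i : ∃ K > (0:ℝ), ∃ ηs > (0:ℝ), ∀ η ∈ Ioo (0:ℝ) ηs, ∀ x : ℝ,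
      (((η ^ K : ℝ) : EReal) ≤ ⨆ y ∈ Ico x (x + η), ((|f y| : ℝ) : EReal)) ∧
      (((η ^ K : ℝ) : EReal) ≤ ⨆ y ∈ Ioc (x - η) x, ((|f y| : ℝ) : EReal)))
    -- (A1)(ii)
    (hfC1 : ContDiff ℝ 1 f)
    (hA1ii : ∃ C₀ > (0:ℝ), ∀ x : ℝ, |deriv f x| ≤ C₀ * (1 + |x|) ^ C₀)
    -- (A1)(iii): polynomial lower growth
    (hA1iii : ∃ Q > (0:ℝ), ∃ p > (0:ℝ), ∃ C > (0:ℝ), ∀ x : ℝ, C ≤ |x| →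
      Q * |x| ^ p ≤ |f x|)
    -- (A2)(i): Hölder continuity in L^{∞-}
    (hA2i : ∃ ρ > (0:ℝ), ∀ r > (1:ℝ), ∃ B : ℝ, ∀ s t : ℝ, 0 ≤ s → s < t → t < s + 1 →
      eLpNorm (fun ω => X t ω - X s ω) (ENNReal.ofReal r) P
        ≤ ENNReal.ofReal (B * (t - s) ^ ρ))
    -- (A2)(iii): relaxed small ball estimate
    (hA2iii : ∃ Δs > (0:ℝ), ∃ γ > (0:ℝ), ∃ lam > (0:ℝ), ∃ μ₀ > (0:ℝ),
      ∃ K₁ > (0:ℝ), ∃ K₂ > (0:ℝ), ∃ K₃ > (0:ℝ),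
      ∀ s : ℝ, 0 ≤ s → ∀ Δ ∈ Ioo (0:ℝ) Δs, ∀ η ∈ Ioo (0:ℝ) (K₃ * Δ ^ γ),
        P {ω | ∀ t ∈ Icc s (s + Δ), |X t ω - X s ω| ≤ η}
          ≤ ENNReal.ofReal (K₁ * Real.exp (-K₂ * η ^ (-lam) * Δ ^ μ₀))) :
    ∀ ε > (0:ℝ), ∀ᵐ ω ∂P,
      Tendsto (fun T : ℝ => T ^ (ε - 1) * ∫ t in Ioc (0:ℝ) T, (f (X t ω)) ^ 2)
        atTop atTop := by
  obtain ⟨K, hK, ηs, hηs, hA⟩ := hA1i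
  obtain ⟨c, hc, hcf⟩ := aux_f f hfC1 hA1iii
  obtain ⟨ρ, hρ, hH⟩ := hA2i
  intro ε hε
  have hE : 0 < (K + 3) / (ρ / 2) + 2 * K := by positivity
  have hδ : 0 < ε / 2 / ((K + 3) / (ρ / 2) + 2 * K) := by positivity
  filter_upwards [hXcont, aux_ball P X hA2iii _ hδ, aux_holder P X hXmeas ρ hρ hH _ hδ]
    with ω h1 h2 ⟨G, hG, h3⟩
  have h4 := aux_block f hfC1.continuous c hc hcf K hK ηs hηs hA (fun t => X t ω) h1 (ρ / 2) _ G
    (by positivity) hδ hG h3 h2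
  rw [div_mul_cancel₀ _ hE.ne'] at h4
  exact aux_final (fun t => f (X t ω) ^ 2) ((hfC1.continuous.comp_continuousOn h1).pow 2)
    (fun t => sq_nonneg _) ε hε h4
end

section
/- Let (Ω, F, P) be a probability space, p > 1, H ∈ (0,1), and let X : [0,∞) × Ω → ℝ be a jointly measurable stochastic process such that ∫₀^T |X_t|^p dt is well defined and finite almost surely for every T > 0. Assume X is self-similar with index H, i.e. for every c > 0, every n ∈ ℕ and all t₁, …, t_n ≥ 0, the random vector (X_{c t₁}, …, X_{c t_n}) has the same distribution as (c^H X_{t₁}, …, c^H X_{t_n}); and assume there exist a constant C > 0 and a nonnegative random variable ξ with P[ξ ≤ y] ≤ C y for all y ≥ 0 such that ∫₀^1 |X_t|^p dt ≥ ξ^p almost surely. Then for every ε ∈ (0, pH), every T ≥ 1 and every x > 0, P[ ∫₀^T |X_t|^p dt < x · T^{1+ε} ] ≤ C · x^{1/p} · T^{−(H − ε/p)}. -/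
open Set Filter MeasureTheory

/-- Monte Carlo approximation of the time integral. -/
lemma mc_tendsto {Ω : Type*} [MeasurableSpace Ω] (P : Measure Ω) [IsProbabilityMeasure P]
    (U : Measure ℝ) [IsProbabilityMeasure U]
    (Y : ℝ → Ω → ℝ) (hY : Measurable (Function.uncurry Y))
    (hYi : ∀ᵐ ω ∂P, Integrable (fun t => Y t ω) U)
    (g : BoundedContinuousFunction ℝ ℝ) :
    Tendsto (fun n : ℕ => ∫ ω, ∫ u : ℕ → ℝ, g ((∑ i ∈ Finset.range n, Y (u i) ω) / n)
        ∂(Measure.infinitePi (fun _ : ℕ => U)) ∂P) atTop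
      (nhds (∫ ω, g (∫ t, Y t ω ∂U) ∂P)) := by
  have hm : ∀ n : ℕ, Measurable (fun q : Ω × (ℕ → ℝ) =>
      g ((∑ i ∈ Finset.range n, Y (q.2 i) q.1) / n)) := by
    intro n
    refine g.continuous.measurable.comp (Measurable.div_const ?_ _)
    refine Finset.measurable_sum _ fun i _ => ?_
    have hq : Measurable (fun q : Ω × (ℕ → ℝ) => ((q.2 i, q.1) : ℝ × Ω)) := by fun_prop
    exact hY.comp hq
  have hYω : ∀ ω, Measurable (fun t => Y t ω) := fun ω =>
    hY.comp (measurable_id.prodMk measurable_const)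
  refine tendsto_integral_of_dominated_convergence (fun _ => ‖g‖) ?_ (integrable_const _) ?_ ?_
  · intro n
    exact ((hm n).stronglyMeasurable.integral_prod_right').aestronglyMeasurable
  · intro n
    refine Eventually.of_forall fun ω => ?_
    refine (norm_integral_le_of_norm_le_const
      (Eventually.of_forall fun u => g.norm_coe_le_norm _)).trans ?_
    simp
  · filter_upwards [hYi] with ω hω
    have hlaw := fun i : ℕ => measurePreserving_eval_infinitePi (fun _ : ℕ => U) i
    have hsl := ProbabilityTheory.strong_law_ae_real
      (μ := Measure.infinitePi (fun _ : ℕ => U)) (fun i u => Y (u i) ω)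
      ((hlaw 0).integrable_comp_of_integrable hω)
      (fun i j hij => (ProbabilityTheory.iIndepFun_infinitePi (P := fun _ : ℕ => U)
        (X := fun _ t => Y t ω) (fun _ => hYω ω)).indepFun hij)
      (fun i => by
        refine ⟨((hYω ω).comp (measurable_pi_apply i)).aemeasurable,
          ((hYω ω).comp (measurable_pi_apply 0)).aemeasurable, ?_⟩
        have h : ∀ j : ℕ, Measure.map (fun u : ℕ → ℝ => Y (u j) ω)
            (Measure.infinitePi (fun _ : ℕ => U)) = Measure.map (fun t => Y t ω) U := by
          intro j
          conv_rhs => rw [← (hlaw j).map_eq]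
          rw [Measure.map_map (hYω ω) (measurable_pi_apply j)]
          rfl
        rw [h i, h 0])
    have hmean : ∫ u : ℕ → ℝ, Y (u 0) ω ∂(Measure.infinitePi (fun _ : ℕ => U))
        = ∫ t, Y t ω ∂U := by
      conv_rhs => rw [← (hlaw 0).map_eq]
      rw [integral_map (measurable_pi_apply 0).aemeasurable
        (hYω ω).aestronglyMeasurable]
    rw [hmean] at hsl
    have hfin := tendsto_integral_of_dominated_convergence
      (μ := Measure.infinitePi (fun _ : ℕ => U))
      (F := fun (n : ℕ) (u : ℕ → ℝ) => g ((∑ i ∈ Finset.range n, Y (u i) ω) / n))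
      (f := fun _ => g (∫ t, Y t ω ∂U)) (fun _ => ‖g‖)
      (fun n => ((hm n).comp measurable_prodMk_left).aestronglyMeasurable)
      (integrable_const _)
      (fun n => Eventually.of_forall fun u => g.norm_coe_le_norm _)
      (by
        filter_upwards [hsl] with u hu
        exact (g.continuous.tendsto _).comp hu)
    simpa using hfin

/-- The law of the time integral is determined by the finite-dimensional distributions. -/
lemma law_integral_eq {Ω : Type*} [MeasurableSpace Ω] (P : Measure Ω) [IsProbabilityMeasure P]
    (U : Measure ℝ) [IsProbabilityMeasure U] (hU : ∀ᵐ t ∂U, 0 ≤ t)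
    (Y Z : ℝ → Ω → ℝ) (hY : Measurable (Function.uncurry Y)) (hZ : Measurable (Function.uncurry Z))
    (hYi : ∀ᵐ ω ∂P, Integrable (fun t => Y t ω) U)
    (hZi : ∀ᵐ ω ∂P, Integrable (fun t => Z t ω) U)
    (hfd : ∀ n : ℕ, ∀ t : Fin n → ℝ, (∀ i, 0 ≤ t i) →
      Measure.map (fun ω => fun i => Y (t i) ω) P = Measure.map (fun ω => fun i => Z (t i) ω) P) :
    Measure.map (fun ω => ∫ t, Y t ω ∂U) P = Measure.map (fun ω => ∫ t, Z t ω ∂U) P := by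
  have hI : ∀ W : ℝ → Ω → ℝ, Measurable (Function.uncurry W) →
      Measurable (fun ω => ∫ t, W t ω ∂U) := fun W hW =>
    (hW.stronglyMeasurable.integral_prod_left' (μ := U)).measurable
  have := Measure.isProbabilityMeasure_map (μ := P) (hI Y hY).aemeasurable
  have := Measure.isProbabilityMeasure_map (μ := P) (hI Z hZ).aemeasurable
  refine ext_of_forall_integral_eq_of_IsFiniteMeasure fun g => ?_
  rw [integral_map (hI Y hY).aemeasurable g.continuous.measurable.aestronglyMeasurable,
    integral_map (hI Z hZ).aemeasurable g.continuous.measurable.aestronglyMeasurable]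
  refine tendsto_nhds_unique (mc_tendsto P U Y hY hYi g) ?_
  refine (mc_tendsto P U Z hZ hZi g).congr fun n => ?_
  have hint : ∀ W : ℝ → Ω → ℝ, Measurable (Function.uncurry W) →
      Integrable (Function.uncurry fun (ω : Ω) (u : ℕ → ℝ) =>
        g ((∑ i ∈ Finset.range n, W (u i) ω) / n))
        (P.prod (Measure.infinitePi (fun _ : ℕ => U))) := by
    intro W hW
    refine Integrable.of_bound (Measurable.aestronglyMeasurable ?_) ‖g‖
      (Eventually.of_forall fun q => g.norm_coe_le_norm _)
    refine g.continuous.measurable.comp (Measurable.div_const ?_ _)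
    refine Finset.measurable_sum _ fun i _ => ?_
    have hq : Measurable (fun q : Ω × (ℕ → ℝ) => ((q.2 i, q.1) : ℝ × Ω)) := by fun_prop
    exact hW.comp hq
  rw [integral_integral_swap (hint Y hY), integral_integral_swap (hint Z hZ)]
  have hpos : ∀ᵐ u ∂(Measure.infinitePi (fun _ : ℕ => U)), ∀ i : ℕ, 0 ≤ u i := by
    rw [ae_all_iff]
    intro i
    exact (measurePreserving_eval_infinitePi (fun _ : ℕ => U) i).quasiMeasurePreserving.ae hU
  refine integral_congr_ae ?_
  filter_upwards [hpos] with u hu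
  have key : ∀ W : ℝ → Ω → ℝ, Measurable (Function.uncurry W) →
      ∫ ω, g ((∑ i ∈ Finset.range n, W (u i) ω) / n) ∂P
        = ∫ v : Fin n → ℝ, g ((∑ i, v i) / n)
            ∂(Measure.map (fun ω => fun i : Fin n => W (u i) ω) P) := by
    intro W hW
    rw [integral_map]
    · simp only [Finset.sum_range]
    · refine (measurable_pi_lambda _ fun i => ?_).aemeasurable
      exact hW.comp (measurable_const.prodMk measurable_id)
    · exact (g.continuous.comp (by fun_prop)).measurable.aestronglyMeasurable
  rw [key Y hY, key Z hZ, hfd n (fun i => u i) (fun i => hu i)]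

/-- quantitative small-value estimate for a self-similar process. Under the
same hypotheses as Statement 5, for every `ε ∈ (0, pH)`, `T ≥ 1` and `x > 0`,
`P[∫₀^T |X_t|^p dt < x T^{1+ε}] ≤ C x^{1/p} T^{-(H - ε/p)}`. -/
theorem stmt_6
    {Ω : Type*} [MeasurableSpace Ω] (P : Measure Ω) [IsProbabilityMeasure P]
    (X : ℝ → Ω → ℝ) (p H : ℝ) (hp : 1 < p) (hH : H ∈ Ioo (0:ℝ) 1)
    (hXmeas : Measurable (Function.uncurry X))
    (hint : ∀ᵐ ω ∂P, ∀ T > (0:ℝ), IntegrableOn (fun t => |X t ω| ^ p) (Ioc 0 T))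
    -- self-similarity with index H
    (hss : ∀ c > (0:ℝ), ∀ n : ℕ, ∀ t : Fin n → ℝ, (∀ i, 0 ≤ t i) →
      Measure.map (fun ω => fun i => X (c * t i) ω) P
        = Measure.map (fun ω => fun i => c ^ H * X (t i) ω) P)
    -- lower bound by ξ^p with P[ξ ≤ y] ≤ C y
    (C : ℝ) (hC : 0 < C) (ξ : Ω → ℝ) (hξnn : ∀ ω, 0 ≤ ξ ω)
    (hξ : ∀ y : ℝ, 0 ≤ y → P {ω | ξ ω ≤ y} ≤ ENNReal.ofReal (C * y))
    (hdom : ∀ᵐ ω ∂P, ξ ω ^ p ≤ ∫ t in Ioc (0:ℝ) 1, |X t ω| ^ p) :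
    ∀ ε ∈ Ioo (0:ℝ) (p * H), ∀ T : ℝ, 1 ≤ T → ∀ x > (0:ℝ),
      P {ω | (∫ t in Ioc (0:ℝ) T, |X t ω| ^ p) < x * T ^ (1 + ε)}
        ≤ ENNReal.ofReal (C * x ^ (1 / p) * T ^ (-(H - ε / p))) := by
  intro ε hε T hT x hx
  have hT0 : 0 < T := by linarith
  have hp0 : 0 < p := by linarith
  have hUp : IsProbabilityMeasure (volume.restrict (Ioc (0:ℝ) 1)) := ⟨by simp⟩
  have hXt : ∀ t, Measurable (X t) := fun t =>
    hXmeas.comp (measurable_const.prodMk measurable_id)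
  have hf : Measurable (fun r : ℝ => |r| ^ p) := by fun_prop
  have hY : Measurable (Function.uncurry fun t ω => |X (T * t) ω| ^ p) :=
    hf.comp (hXmeas.comp ((measurable_fst.const_mul T).prodMk measurable_snd))
  have hZ : Measurable (Function.uncurry fun t ω => |T ^ H * X t ω| ^ p) :=
    hf.comp (hXmeas.const_mul (T ^ H))
  have hZe : ∀ t ω, |T ^ H * X t ω| ^ p = T ^ (H * p) * |X t ω| ^ p := by
    intro t ω
    rw [abs_mul, Real.mul_rpow (abs_nonneg _) (abs_nonneg _),
      abs_of_pos (Real.rpow_pos_of_pos hT0 _), ← Real.rpow_mul hT0.le]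
  have hlaw := law_integral_eq P (volume.restrict (Ioc (0:ℝ) 1))
    (by filter_upwards [ae_restrict_mem measurableSet_Ioc] with t ht using ht.1.le)
    (fun t ω => |X (T * t) ω| ^ p) (fun t ω => |T ^ H * X t ω| ^ p) hY hZ
    (by
      filter_upwards [hint] with ω hω
      have h1 : IntervalIntegrable (fun t => |X t ω| ^ p) volume 0 T :=
        (intervalIntegrable_iff_integrableOn_Ioc_of_le hT0.le).2 (hω T hT0)
      have h2 := h1.comp_mul_left (c := T)
      rw [zero_div, div_self hT0.ne', intervalIntegrable_iff_integrableOn_Ioc_of_le zero_le_one] at h2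
      exact h2)
    (by
      filter_upwards [hint] with ω hω
      simp only [hZe]
      exact (hω 1 one_pos).const_mul _)
    (by
      intro n t ht
      have h := hss T hT0 n t ht
      have hF : Measurable (fun (v : Fin n → ℝ) (i : Fin n) => |v i| ^ p) :=
        measurable_pi_lambda _ fun i => hf.comp (measurable_pi_apply i)
      have h2 := congrArg (Measure.map (fun (v : Fin n → ℝ) (i : Fin n) => |v i| ^ p)) h
      rw [Measure.map_map hF (measurable_pi_lambda _ fun i => hXt _),
        Measure.map_map hF (measurable_pi_lambda _ fun i => (hXt _).const_mul _)] at h2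
      exact h2)
  have hsc : ∀ ω, (∫ t in Ioc (0:ℝ) T, |X t ω| ^ p)
      = T * ∫ t in Ioc (0:ℝ) 1, |X (T * t) ω| ^ p := by
    intro ω
    have h := intervalIntegral.smul_integral_comp_mul_left (a := 0) (b := 1)
      (fun t => |X t ω| ^ p) T
    rw [mul_zero, mul_one, intervalIntegral.integral_of_le zero_le_one,
      intervalIntegral.integral_of_le hT0.le, smul_eq_mul] at h
    exact h.symm
  have hm1 : Measurable (fun ω => ∫ t in Ioc (0:ℝ) 1, |X (T * t) ω| ^ p) :=
    (hY.stronglyMeasurable.integral_prod_left' (μ := volume.restrict (Ioc (0:ℝ) 1))).measurable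
  have hm2 : Measurable (fun ω => ∫ t in Ioc (0:ℝ) 1, |T ^ H * X t ω| ^ p) :=
    (hZ.stronglyMeasurable.integral_prod_left' (μ := volume.restrict (Ioc (0:ℝ) 1))).measurable
  have hset := congrArg (fun m => m (Iio (x * T ^ ε))) hlaw
  simp only [Measure.map_apply hm1 measurableSet_Iio, Measure.map_apply hm2 measurableSet_Iio]
    at hset
  have e1 : {ω | (∫ t in Ioc (0:ℝ) T, |X t ω| ^ p) < x * T ^ (1 + ε)}
      = (fun ω => ∫ t in Ioc (0:ℝ) 1, |X (T * t) ω| ^ p) ⁻¹' Iio (x * T ^ ε) := by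
    ext ω
    simp only [mem_ofPred_eq, mem_preimage, mem_Iio, hsc ω, Real.rpow_add hT0, Real.rpow_one]
    rw [show x * (T * T ^ ε) = T * (x * T ^ ε) by ring, mul_lt_mul_iff_right₀ hT0]
  rw [e1, hset]
  set y : ℝ := x ^ (1 / p) * T ^ (-(H - ε / p)) with hy
  have hy0 : 0 ≤ y := by positivity
  have hyp : y ^ p * T ^ (H * p) = x * T ^ ε := by
    rw [hy, Real.mul_rpow (by positivity) (by positivity), ← Real.rpow_mul hx.le,
      ← Real.rpow_mul hT0.le, one_div, inv_mul_cancel₀ hp0.ne', Real.rpow_one, mul_assoc,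
      ← Real.rpow_add hT0]
    congr 2
    field_simp
    ring
  rw [mul_assoc]
  refine le_trans (measure_mono_ae ?_) (hξ y hy0)
  filter_upwards [hdom] with ω hω hlt
  change (∫ t in Ioc (0:ℝ) 1, |T ^ H * X t ω| ^ p) < x * T ^ ε at hlt
  change ξ ω ≤ y
  simp only [hZe] at hlt
  rw [integral_const_mul, ← hyp, mul_comm (y ^ p), mul_lt_mul_iff_right₀ (by positivity)] at hlt
  exact ((Real.rpow_lt_rpow_iff (hξnn ω) hy0 hp0).1 (hω.trans_lt hlt)).le
end
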